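/- arXiv:2211.09341 — 2 statements merged into one kernel-verified Lean document; each statement's English description precedes it below -/
import Mathlib

section
/- Let x ∈ F_q^n and let f : F_q^n → F_q. If Pr_{C ∈ 𝒞_x}[T(C) and f|_C agree on at least a (1 − 2γ) fraction of the points of C] ≥ ε/10, then there exists an n-variate polynomial g over F_q of total degree at most d such that f(z) = g(z) for at least a (1 − 4dγ) fraction of z ∈ F_q^n. -/
/-!
The line test drives the proof. Parametrise the cubes through `x` by triples `U` of vectors: three
linearly independent parameters give independent uniform points of the space, so the statistics of
a random cube through `x` have variance `O(1 / q)` (`sampling`, `sampling_lines`,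
`sampling_points`). The hypothesis `ε ≥ 10⁷ d⁶ / q` makes the good cubes, those on which `f` is
`2γ`-close to the table, dense enough for Chebyshev to produce a good cube on which a given
statistic is within a small multiple of `γ = 1 / (1000 d³)` of its mean over the whole space
(`exists_good_cube`).

For the statistic "mean distance of `f` on a line from univariate degree `d`", a good cube
contributes at most `2γ`, so the mean over all lines of the space is at most `5γ`. This is a small
multiple of `d⁻³`, which suffices for self-correction in the manner of Rubinfeld and Sudan
(`close_of_lineDist`): extrapolating `f` to `y` along lines through `y` gives almost always the same
value `g y`, and `g` has degree at most `d` on every line. A function with that property is a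
polynomial of total degree at most `d` when `2 d < q` (`exists_poly_of_lines`). This makes `f`
`1/10`-close to `g`.

Finally, take the statistic "fraction of points where `f ≠ g`". On a typical good cube the table
entry then agrees with `g` on more than a `(d + 1) / q` fraction of the points, hence everywhere on
the cube (`exp_agree_le`), so `f` and `g` are `2γ`-close there and `4γ`-close on the whole space.
-/

open MvPolynomial

/-- A cube: a 3-dimensional affine subspace of `F^n`. -/
def IsCube (F : Type) [Field F] [Fintype F] (n : ℕ) (C : AffineSubspace F (Fin n → F)) : Prop :=
  (C : Set (Fin n → F)).Nonempty ∧ Module.finrank F C.direction = 3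

/-- A line: a 1-dimensional affine subspace of `F^n`. -/
def IsLine (F : Type) [Field F] [Fintype F] (n : ℕ) (ℓ : AffineSubspace F (Fin n → F)) : Prop :=
  (ℓ : Set (Fin n → F)).Nonempty ∧ Module.finrank F ℓ.direction = 1

/-- `𝒞_x`: cubes containing the point `x`. -/
def cubesOn (F : Type) [Field F] [Fintype F] (n : ℕ) (x : Fin n → F) :
    Set (AffineSubspace F (Fin n → F)) :=
  {C | IsCube F n C ∧ x ∈ C}

/-- `𝒞_{x,y}`: cubes containing the points `x` and `y`. -/
def cubesOn2 (F : Type) [Field F] [Fintype F] (n : ℕ) (x y : Fin n → F) :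
    Set (AffineSubspace F (Fin n → F)) :=
  {C | IsCube F n C ∧ x ∈ C ∧ y ∈ C}

/-- `𝒞_{x,σ}`: cubes containing `x` on which the table `T` gives `x` the value `σ`. -/
def cubesVal (F : Type) [Field F] [Fintype F] (n : ℕ)
    (T : AffineSubspace F (Fin n → F) → (Fin n → F) → F) (x : Fin n → F) (σ : F) :
    Set (AffineSubspace F (Fin n → F)) :=
  {C | IsCube F n C ∧ x ∈ C ∧ T C x = σ}

/-- `μ_x(A)`: measure of `A` relative to all cubes containing `x`. -/
noncomputable def muX (F : Type) [Field F] [Fintype F] (n : ℕ) (x : Fin n → F)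
    (A : Set (AffineSubspace F (Fin n → F))) : ℝ :=
  (A.ncard : ℝ) / ((cubesOn F n x).ncard : ℝ)

/-- `μ_{x,y}(A)`: measure of `A` relative to all cubes containing `x` and `y`. -/
noncomputable def muXY (F : Type) [Field F] [Fintype F] (n : ℕ) (x y : Fin n → F)
    (A : Set (AffineSubspace F (Fin n → F))) : ℝ :=
  (A.ncard : ℝ) / ((cubesOn2 F n x y).ncard : ℝ)

/-- Two cubes intersecting in a plane (a 2-dimensional affine subspace). -/
def PlanePair (F : Type) [Field F] [Fintype F] (n : ℕ)
    (C₁ C₂ : AffineSubspace F (Fin n → F)) : Prop :=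
  IsCube F n C₁ ∧ IsCube F n C₂ ∧
    ((C₁ ⊓ C₂ : AffineSubspace F (Fin n → F)) : Set (Fin n → F)).Nonempty ∧
    Module.finrank F (C₁ ⊓ C₂ : AffineSubspace F (Fin n → F)).direction = 2

/-- `T(C₁)` and `T(C₂)` agree on `C₁ ∩ C₂`. -/
def Agrees (F : Type) [Field F] [Fintype F] (n : ℕ)
    (T : AffineSubspace F (Fin n → F) → (Fin n → F) → F)
    (C₁ C₂ : AffineSubspace F (Fin n → F)) : Prop :=
  ∀ z : Fin n → F, z ∈ C₁ → z ∈ C₂ → T C₁ z = T C₂ z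

/-- `ε(T)`: the acceptance probability of the cube versus cube test. -/
noncomputable def epsT (F : Type) [Field F] [Fintype F] (n : ℕ)
    (T : AffineSubspace F (Fin n → F) → (Fin n → F) → F) : ℝ :=
  (({p : AffineSubspace F (Fin n → F) × AffineSubspace F (Fin n → F) |
      PlanePair F n p.1 p.2 ∧ Agrees F n T p.1 p.2}).ncard : ℝ) /
  (({p : AffineSubspace F (Fin n → F) × AffineSubspace F (Fin n → F) |
      PlanePair F n p.1 p.2}).ncard : ℝ)

/-- A degree-`d` cubes table: each entry is the restriction to `C` of a polynomial of total
degree at most `d`. -/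
def DegTable (F : Type) [Field F] [Fintype F] (n d : ℕ)
    (T : AffineSubspace F (Fin n → F) → (Fin n → F) → F) : Prop :=
  ∀ C : AffineSubspace F (Fin n → F), IsCube F n C →
    ∃ p : MvPolynomial (Fin n) F, p.totalDegree ≤ d ∧ ∀ z ∈ C, T C z = eval z p

/-- `γ = 1/(1000 d³)`. -/
noncomputable def gam (d : ℕ) : ℝ := 1 / (1000 * (d : ℝ) ^ 3)

namespace CubeTest

/-! ### Low degree on every line implies low total degree -/

lemma lineRestrict {σ F : Type*} [Field F] (p : MvPolynomial σ F) (y h : σ → F) :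
    ∃ r : Polynomial F, r.natDegree ≤ p.totalDegree ∧
      ∀ t : F, r.eval t = eval (y + t • h) p := by
  classical
  refine ⟨aeval (fun i => Polynomial.C (y i) + Polynomial.C (h i) * Polynomial.X) p, ?_, ?_⟩
  · rw [aeval_def, eval₂_eq]
    refine Polynomial.natDegree_sum_le_of_forall_le _ _ fun m hm => ?_
    refine (Polynomial.natDegree_C_mul_le _ _).trans ?_
    refine (Polynomial.natDegree_prod_le _ _).trans ?_
    refine le_trans (Finset.sum_le_sum fun i _ => ?_) (le_totalDegree hm)
    refine Polynomial.natDegree_pow_le.trans ?_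
    refine (Nat.mul_le_mul_left _ (?_ : _ ≤ 1)).trans (by simp)
    compute_degree
  · intro t
    have := MvPolynomial.map_aeval (Polynomial.evalRingHom t) (p := p)
      (g := fun i => Polynomial.C (y i) + Polynomial.C (h i) * Polynomial.X)
    simp only [Polynomial.coe_evalRingHom] at this
    rw [this, eval, eval₂Hom]
    simp
    congr 1
    · ext; simp
    · ext i; simp [mul_comm]

lemma eval_smul_of_isHomogeneous {σ F : Type*} [Field F] {p : MvPolynomial σ F} {k : ℕ}
    (hp : p.IsHomogeneous k) (t : F) (h : σ → F) : eval (t • h) p = t ^ k * eval h p := by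
  classical
  rw [eval_eq, eval_eq, Finset.mul_sum]
  refine Finset.sum_congr rfl fun m hm => ?_
  simp only [Pi.smul_apply, smul_eq_mul, mul_pow, Finset.prod_mul_distrib,
    Finset.prod_pow_eq_pow_sum]
  rw [hp.degree_eq_sum_deg_support hm]
  ring

/-- The coefficient of `t ^ k` in `t ↦ p (t • h)` is the value at `h` of the degree-`k` homogeneous
part of `p`, so that part vanishes identically for every `k > d`. -/
lemma totalDegree_le_of_lines {F : Type*} [Field F] [Fintype F] {n d : ℕ}
    (p : MvPolynomial (Fin n) F) (hp : p.totalDegree < Fintype.card F)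
    (hd : d < Fintype.card F)
    (hl : ∀ h : Fin n → F, ∃ r : Polynomial F, r.natDegree ≤ d ∧
      ∀ t : F, r.eval t = eval (t • h) p) : p.totalDegree ≤ d := by
  classical
  set D := p.totalDegree with hD
  have key : ∀ k, d < k → homogeneousComponent k p = 0 := by
    intro k hk
    by_cases hkD : D < k
    · exact homogeneousComponent_eq_zero _ _ hkD
    refine (homogeneousComponent_isHomogeneous k p).eq_zero_of_forall_eval_eq_zero_of_le_card ?_ ?_
    swap
    · rw [Cardinal.mk_fintype]; exact_mod_cast (not_lt.1 hkD).trans hp.le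
    intro h
    obtain ⟨r, hr, hrt⟩ := hl h
    set P : Polynomial F := ∑ j ∈ Finset.range (D + 1),
      Polynomial.monomial j (eval h (homogeneousComponent j p)) with hP
    have hPt : ∀ t : F, P.eval t = eval (t • h) p := by
      intro t
      conv_rhs => rw [← sum_homogeneousComponent p]
      rw [hP, Polynomial.eval_finsetSum, map_sum]
      refine Finset.sum_congr rfl fun j _ => ?_
      rw [Polynomial.eval_monomial, mul_comm]
      exact (eval_smul_of_isHomogeneous (homogeneousComponent_isHomogeneous j p) _ _).symm
    have hPr : P = r := by
      refine Polynomial.eq_of_degree_sub_lt_of_eval_finset_eq Finset.univ ?_ fun t _ => by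
        rw [hPt, hrt]
      refine lt_of_le_of_lt (Polynomial.degree_sub_le _ _) ?_
      rw [Finset.card_univ]
      refine max_lt ?_ ?_
      · refine lt_of_le_of_lt (Polynomial.degree_sum_le _ _) ?_
        rw [Finset.sup_lt_iff (by exact WithBot.bot_lt_coe _)]
        intro j hj
        refine lt_of_le_of_lt (Polynomial.degree_monomial_le _ _) ?_
        have := Finset.mem_range.1 hj
        exact_mod_cast (by omega : j < Fintype.card F)
      · refine lt_of_le_of_lt Polynomial.degree_le_natDegree ?_
        exact_mod_cast hr.trans_lt hd
    have hc : P.coeff k = 0 := by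
      rw [hPr]; exact Polynomial.coeff_eq_zero_of_natDegree_lt (hr.trans_lt hk)
    rw [hP, Polynomial.finsetSum_coeff] at hc
    simp only [Polynomial.coeff_monomial] at hc
    rw [Finset.sum_ite_eq' (Finset.range (D+1)) k] at hc
    rwa [if_pos (by simp; omega)] at hc
  rw [hD, ← sum_homogeneousComponent p]
  refine (totalDegree_finsetSum _ _).trans (Finset.sup_le fun k _ => ?_)
  by_cases hk : d < k
  · rw [key k hk]; simp
  · exact (homogeneousComponent_isHomogeneous k p).totalDegree_le.trans (not_lt.1 hk)

lemma eval_basis {F : Type*} [Field F] {d : ℕ} (s : Fin (d + 1) → F) (hs : Function.Injective s)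
    (r : Polynomial F) (hr : r.natDegree ≤ d) (t : F) :
    r.eval t = ∑ i, (Lagrange.basis Finset.univ s i).eval t * r.eval (s i) := by
  have h := Lagrange.eq_interpolate (s := Finset.univ) (v := s) (f := r) hs.injOn (by
    refine lt_of_le_of_lt Polynomial.degree_le_natDegree ?_
    simp; exact_mod_cast Nat.lt_succ_of_le hr)
  conv_lhs => rw [h, Lagrange.interpolate_apply, Polynomial.eval_finsetSum]
  simp [mul_comm]

/-- A function on `F^n` whose restriction to every line has degree at most `d` is a polynomial of
total degree at most `d`. Interpolating in the first coordinate gives a polynomial of total degree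
at most `2 * d`, which is below the field size, so `totalDegree_le_of_lines` applies. -/
lemma exists_poly_of_lines {F : Type*} [Field F] [Fintype F] {d : ℕ}
    (hd : 2 * d < Fintype.card F) : ∀ (n : ℕ) (g : (Fin n → F) → F)
    (_ : ∀ y h : Fin n → F, ∃ r : Polynomial F, r.natDegree ≤ d ∧
      ∀ t : F, r.eval t = g (y + t • h)),
    ∃ p : MvPolynomial (Fin n) F, p.totalDegree ≤ d ∧ ∀ z, g z = eval z p := by
  classical
  intro n
  induction n with
  | zero =>
    intro g _
    refine ⟨C (g 0), by simp, fun z => ?_⟩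
    rw [Subsingleton.elim z 0, eval_C]
  | succ n ih =>
    intro g hg
    obtain ⟨s⟩ : Nonempty (Fin (d + 1) ↪ F) :=
      Function.Embedding.nonempty_of_card_le (by simp; omega)
    have hslice : ∀ i : Fin (d + 1), ∃ p : MvPolynomial (Fin n) F, p.totalDegree ≤ d ∧
        ∀ z, g (Fin.cons (s i) z) = eval z p := by
      intro i
      refine ih _ fun y h => ?_
      obtain ⟨r, hr, hrt⟩ := hg (Fin.cons (s i) y) (Fin.cons 0 h)
      refine ⟨r, hr, fun t => ?_⟩
      rw [hrt]
      congr 1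
      ext j
      refine Fin.cases ?_ (fun j => ?_) j <;> simp
    choose P hPd hP using hslice
    set p : MvPolynomial (Fin (n + 1)) F := ∑ i,
      Polynomial.aeval (X 0) (Lagrange.basis Finset.univ s i) * rename Fin.succ (P i) with hp
    have hgp : ∀ z, g z = eval z p := by
      intro z
      obtain ⟨r, hr, hrt⟩ := hg (Fin.cons 0 (Fin.tail z)) (Fin.cons 1 0)
      have hline : ∀ t : F, (Fin.cons 0 (Fin.tail z) : Fin (n + 1) → F) + t • (Fin.cons 1 0)
          = Fin.cons t (Fin.tail z) := by
        intro t; ext j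
        refine Fin.cases ?_ (fun j => ?_) j <;> simp
      have h1 := eval_basis s s.injective r hr (z 0)
      simp only [hrt, hline] at h1
      rw [Fin.cons_self_tail] at h1
      rw [h1, hp, map_sum]
      refine Finset.sum_congr rfl fun i _ => ?_
      rw [map_mul, eval_rename, hP]
      congr 1
      have := Polynomial.hom_eval₂ (Lagrange.basis Finset.univ s i)
        (algebraMap F (MvPolynomial (Fin (n + 1)) F)) (eval z) (X 0)
      rw [Polynomial.aeval_def, this, eval_X, Polynomial.eval]
      congr 1
      ext; simp
    refine ⟨p, totalDegree_le_of_lines p ?_ (by omega) fun h => ?_, hgp⟩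
    · refine lt_of_le_of_lt ?_ hd
      refine (totalDegree_finsetSum _ _).trans (Finset.sup_le fun i _ => ?_)
      refine (totalDegree_mul _ _).trans ?_
      have h1 : (Polynomial.aeval (X 0 : MvPolynomial (Fin (n + 1)) F)
          (Lagrange.basis Finset.univ s i)).totalDegree ≤ d := by
        rw [Polynomial.aeval_eq_sum_range]
        refine (totalDegree_finsetSum _ _).trans (Finset.sup_le fun k hk => ?_)
        refine (totalDegree_smul_le _ _).trans ?_
        rw [totalDegree_X_pow]
        have := Finset.mem_range.1 hk
        rw [Lagrange.natDegree_basis s.injective.injOn (Finset.mem_univ i)] at this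
        simp at this
        omega
      have h2 := (totalDegree_rename_le (Fin.succ : Fin n → Fin (n + 1)) (P i)).trans (hPd i)
      omega
    · obtain ⟨r, hr, hrt⟩ := hg 0 h
      exact ⟨r, hr, fun t => by rw [hrt, zero_add, hgp]⟩

open scoped BigOperators

/-! ### Indicators and averages -/

/-- The indicator of a proposition, as a real number. -/
noncomputable def ind (P : Prop) : ℝ := open Classical in if P then 1 else 0

lemma ind_nonneg (P : Prop) : 0 ≤ ind P := by unfold ind; split_ifs <;> norm_num

lemma ind_le_one (P : Prop) : ind P ≤ 1 := by unfold ind; split_ifs <;> norm_num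

lemma ind_true {P : Prop} (h : P) : ind P = 1 := by unfold ind; rw [if_pos h]

lemma ind_false {P : Prop} (h : ¬ P) : ind P = 0 := by unfold ind; rw [if_neg h]

lemma ind_le_add {P Q R : Prop} (h : P → Q ∨ R) : ind P ≤ ind Q + ind R := by
  by_cases hP : P
  · rw [ind_true hP]
    rcases h hP with hQ | hR
    · rw [ind_true hQ]; linarith [ind_nonneg R]
    · rw [ind_true hR]; linarith [ind_nonneg Q]
  · rw [ind_false hP]; linarith [ind_nonneg R, ind_nonneg Q]

lemma ind_mono {P Q : Prop} (h : P → Q) : ind P ≤ ind Q := by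
  by_cases hP : P
  · rw [ind_true hP, ind_true (h hP)]
  · rw [ind_false hP]; exact ind_nonneg Q

lemma ind_exists_le {ι : Type*} [Fintype ι] (Q : ι → Prop) : ind (∃ i, Q i) ≤ ∑ i, ind (Q i) := by
  by_cases hP : ∃ i, Q i
  · obtain ⟨i, hi⟩ := hP
    calc ind (∃ i, Q i) ≤ 1 := ind_le_one _
      _ = ind (Q i) := (ind_true hi).symm
      _ ≤ _ := Finset.single_le_sum (f := fun i => ind (Q i)) (fun _ _ => ind_nonneg _)
        (Finset.mem_univ i)
  · rw [ind_false hP]; exact Finset.sum_nonneg fun _ _ => ind_nonneg _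

lemma exp_mono {α : Type*} [Fintype α] {φ ψ : α → ℝ} (h : ∀ a, φ a ≤ ψ a) :
    𝔼 a, φ a ≤ 𝔼 a, ψ a := Finset.expect_le_expect fun a _ => h a

lemma exp_congr {α : Type*} [Fintype α] {φ ψ : α → ℝ} (h : ∀ a, φ a = ψ a) :
    𝔼 a, φ a = 𝔼 a, ψ a := Finset.expect_congr rfl fun a _ => h a

lemma exp_comm {α β : Type*} [Fintype α] [Fintype β] (φ : α → β → ℝ) :
    𝔼 a, 𝔼 b, φ a b = 𝔼 b, 𝔼 a, φ a b := Finset.expect_comm _ _ _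

lemma exp_add {α : Type*} [Fintype α] (φ ψ : α → ℝ) :
    𝔼 a, (φ a + ψ a) = 𝔼 a, φ a + 𝔼 a, ψ a := Finset.expect_add_distrib _ _ _

lemma exp_sum {α ι : Type*} [Fintype α] [Fintype ι] (φ : α → ι → ℝ) :
    𝔼 a, ∑ i, φ a i = ∑ i, 𝔼 a, φ a i := Finset.expect_sum_comm _ _ _


lemma exp_shift {V : Type*} [AddCommGroup V] [Fintype V] (φ : V → ℝ) (v : V) :
    𝔼 y, φ (y + v) = 𝔼 y, φ y :=
  Fintype.expect_equiv (Equiv.addRight v) _ _ fun _ => rfl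

lemma exp_affine {F V : Type*} [Field F] [AddCommGroup V] [Module F V] [Fintype V]
    (φ : V → ℝ) (v : V) {s : F} (hs : s ≠ 0) : 𝔼 h, φ (v + s • h) = 𝔼 h, φ h := by
  refine Fintype.expect_bijective (fun h => v + s • h) (Finite.injective_iff_bijective.1 ?_) _ _
    fun _ => rfl
  intro a b hab
  exact smul_right_injective V hs (add_left_cancel hab)

/-! ### The line test and self-correction -/

lemma exists_nearest {F V : Type*} [Field F] [Fintype F] [AddCommGroup V] [Module F V]
    (d : ℕ) (f : V → F) (y h : V) :
    ∃ r : Polynomial F, r.natDegree ≤ d ∧ ∀ r' : Polynomial F, r'.natDegree ≤ d →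
      𝔼 t : F, ind (f (y + t • h) ≠ r.eval t) ≤ 𝔼 t : F, ind (f (y + t • h) ≠ r'.eval t) := by
  classical
  obtain ⟨φ, ⟨r, hr, rfl⟩, hmin⟩ := Set.exists_min_image
    {φ : F → F | ∃ r : Polynomial F, r.natDegree ≤ d ∧ φ = fun t => r.eval t}
    (fun φ => 𝔼 t : F, ind (f (y + t • h) ≠ φ t)) (Set.toFinite _) ⟨_, 0, by simp, rfl⟩
  exact ⟨r, hr, fun r' hr' => hmin _ ⟨r', hr', rfl⟩⟩

/-- A polynomial of degree at most `d` agreeing with `t ↦ f (y + t • h)` as often as possible. -/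
noncomputable def nearest {F V : Type*} [Field F] [Fintype F] [AddCommGroup V] [Module F V]
    (d : ℕ) (f : V → F) (y h : V) : Polynomial F := (exists_nearest d f y h).choose

/-- The relative distance from `t ↦ f (y + t • h)` to the univariate polynomials of degree at most
`d`. The direction `h` may be `0`, in which case the distance is `0`. -/
noncomputable def lineDist {F V : Type*} [Field F] [Fintype F] [AddCommGroup V] [Module F V]
    (d : ℕ) (f : V → F) (y h : V) : ℝ :=
  𝔼 t : F, ind (f (y + t • h) ≠ (nearest d f y h).eval t)

lemma lineDist_le {F V : Type*} [Field F] [Fintype F] [AddCommGroup V] [Module F V]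
    (d : ℕ) (f : V → F) (y h : V) (r : Polynomial F) (hr : r.natDegree ≤ d) :
    lineDist d f y h ≤ 𝔼 t : F, ind (f (y + t • h) ≠ r.eval t) :=
  (exists_nearest d f y h).choose_spec.2 r hr

lemma lineDist_nonneg {F V : Type*} [Field F] [Fintype F] [AddCommGroup V] [Module F V]
    (d : ℕ) (f : V → F) (y h : V) : 0 ≤ lineDist d f y h :=
  Finset.expect_nonneg fun _ _ => ind_nonneg _

lemma lineDist_le_one {F V : Type*} [Field F] [Fintype F] [AddCommGroup V] [Module F V]
    (d : ℕ) (f : V → F) (y h : V) : lineDist d f y h ≤ 1 :=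
  Finset.expect_le Finset.univ_nonempty fun _ _ => ind_le_one _

/-- The extrapolation to parameter `t` of the values of `f` at the `d + 1` points `y + s i • h` of
a line, by the polynomial of degree at most `d` through them. -/
noncomputable def extrap {F V : Type*} [Field F] [AddCommGroup V] [Module F V] {d : ℕ}
    (s : Fin (d + 1) → F) (f : V → F) (t : F) (y h : V) : F :=
  ∑ i, (Lagrange.basis Finset.univ s i).eval t * f (y + s i • h)

/-- A random line fails a fixed extrapolation identity with probability at most `(d + 2) δ`, where
`δ` is the mean line distance: re-choosing the base point at random on the line makes each of the
`d + 2` points involved a uniform point of that line. -/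
lemma extrap_fail_le {F V : Type*} [Field F] [Fintype F] [AddCommGroup V] [Module F V] [Fintype V]
    {d : ℕ} (s : Fin (d + 1) → F) (hs : Function.Injective s) (f : V → F) (t : F) :
    𝔼 y, 𝔼 h, ind (f (y + t • h) ≠ extrap s f t y h)
      ≤ (d + 2) * 𝔼 y, 𝔼 h, lineDist d f y h := by
  have h1 : 𝔼 y, 𝔼 h, ind (f (y + t • h) ≠ extrap s f t y h) =
      𝔼 y, 𝔼 h, 𝔼 τ : F, ind (f (y + τ • h + t • h) ≠ extrap s f t (y + τ • h) h) := by
    rw [exp_comm, exp_comm (fun y h => 𝔼 τ : F, _)]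
    refine exp_congr fun h => ?_
    rw [exp_comm]
    rw [← Fintype.expect_const (ι := F) (𝔼 y, ind (f (y + t • h) ≠ extrap s f t y h))]
    refine exp_congr fun τ => ?_
    exact (exp_shift (fun y => ind (f (y + t • h) ≠ extrap s f t y h)) (τ • h)).symm
  rw [h1, Finset.mul_expect]
  refine exp_mono fun y => ?_
  rw [Finset.mul_expect]
  refine exp_mono fun h => ?_
  set r := nearest d f y h with hr
  have hrd : r.natDegree ≤ d := (exists_nearest d f y h).choose_spec.1
  have hpt : ∀ u : F, 𝔼 τ : F, ind (f (y + τ • h + u • h) ≠ r.eval (τ + u)) = lineDist d f y h := by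
    intro u
    rw [lineDist, ← exp_shift (fun τ => ind (f (y + τ • h) ≠ _)) u]
    refine exp_congr fun τ => ?_
    rw [add_smul, add_assoc]
  have h2 : ∀ τ : F, ind (f (y + τ • h + t • h) ≠ extrap s f t (y + τ • h) h) ≤
      ind (f (y + τ • h + t • h) ≠ r.eval (τ + t)) +
      ∑ i, ind (f (y + τ • h + s i • h) ≠ r.eval (τ + s i)) := by
    intro τ
    refine le_trans (ind_le_add (R := ∃ i, f (y + τ • h + s i • h) ≠ r.eval (τ + s i)) ?_)
      (add_le_add le_rfl (ind_exists_le _))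
    intro hne
    by_contra! hcon
    apply hne
    rw [hcon.1, extrap]
    have h3 := eval_basis s hs (r.comp (Polynomial.C τ + Polynomial.X)) (by
      refine Polynomial.natDegree_comp_le.trans ?_
      refine (Nat.mul_le_mul_left _ (?_ : _ ≤ 1)).trans (by simpa using hrd)
      compute_degree) t
    simp only [Polynomial.eval_comp, Polynomial.eval_add, Polynomial.eval_C,
      Polynomial.eval_X] at h3
    rw [h3]
    exact Finset.sum_congr rfl fun i _ => by rw [hcon.2]
  refine (exp_mono h2).trans (le_of_eq ?_)
  rw [exp_add, exp_sum, hpt]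
  simp only [hpt, Finset.sum_const, Finset.card_univ, Fintype.card_fin, nsmul_eq_mul]
  push_cast; ring

/-- Two random directions extrapolate the same value to `y` from any point `y`, however `f` behaves
there: both values equal the same double sum over a `(d + 1) × (d + 1)` grid through `y`. -/
lemma extrap_disagree_le {F V : Type*} [Field F] [Fintype F] [AddCommGroup V] [Module F V]
    [Fintype V] {d : ℕ} (s : Fin (d + 1) → F) (hs : Function.Injective s) (hs0 : ∀ i, s i ≠ 0)
    (f : V → F) (y : V) :
    𝔼 h₁, 𝔼 h₂, ind (extrap s f 0 y h₁ ≠ extrap s f 0 y h₂)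
      ≤ 2 * (d + 1) * ((d + 2) * 𝔼 y, 𝔼 h, lineDist d f y h) := by
  set B := 𝔼 y, 𝔼 h, ind (f y ≠ extrap s f 0 y h) with hB
  have hBle : B ≤ (d + 2) * 𝔼 y, 𝔼 h, lineDist d f y h := by
    have := extrap_fail_le s hs f 0
    simpa only [zero_smul, add_zero] using this
  have h1 : ∀ h₁ h₂ : V, ind (extrap s f 0 y h₁ ≠ extrap s f 0 y h₂) ≤
      ∑ i, ind (f (y + s i • h₁) ≠ extrap s f 0 (y + s i • h₁) h₂) +
      ∑ i, ind (f (y + s i • h₂) ≠ extrap s f 0 (y + s i • h₂) h₁) := by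
    intro h₁ h₂
    refine le_trans (ind_le_add (Q := ∃ i, f (y + s i • h₁) ≠ extrap s f 0 (y + s i • h₁) h₂)
      (R := ∃ i, f (y + s i • h₂) ≠ extrap s f 0 (y + s i • h₂) h₁) ?_)
      (add_le_add (ind_exists_le _) (ind_exists_le _))
    intro hne
    by_contra! hcon
    apply hne
    rw [extrap, extrap]
    simp only [hcon.1, hcon.2]
    simp only [extrap, Finset.mul_sum]
    rw [Finset.sum_comm]
    refine Finset.sum_congr rfl fun i _ => Finset.sum_congr rfl fun j _ => ?_
    rw [add_right_comm]; ring
  have h2 : ∀ i, 𝔼 h₁, 𝔼 h₂, ind (f (y + s i • h₁) ≠ extrap s f 0 (y + s i • h₁) h₂) = B :=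
    fun i => exp_affine (fun z => 𝔼 h₂, ind (f z ≠ extrap s f 0 z h₂)) y (hs0 i)
  have h3 : ∀ i, 𝔼 h₁, 𝔼 h₂, ind (f (y + s i • h₂) ≠ extrap s f 0 (y + s i • h₂) h₁) = B := by
    intro i; rw [exp_comm]; exact h2 i
  calc _ ≤ 𝔼 h₁, 𝔼 h₂, (∑ i, ind (f (y + s i • h₁) ≠ extrap s f 0 (y + s i • h₁) h₂) +
      ∑ i, ind (f (y + s i • h₂) ≠ extrap s f 0 (y + s i • h₂) h₁)) :=
        exp_mono fun h₁ => exp_mono fun h₂ => h1 h₁ h₂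
    _ = 2 * (d + 1) * B := by
        simp only [exp_add, exp_sum, h2, h3, Finset.sum_const, Finset.card_univ, Fintype.card_fin,
          nsmul_eq_mul]
        push_cast; ring
    _ ≤ _ := by gcongr

/-- Robust characterisation of low degree: if the mean distance of `f` on a random line to degree
`d` is `δ = O(d⁻³)`, then `f` is `O(d² δ)`-close to a polynomial of total degree at most `d`. -/
theorem close_of_lineDist {F : Type*} [Field F] [Fintype F] {n d : ℕ} (f : (Fin n → F) → F)
    (hq : 2 * d + 2 ≤ Fintype.card F)
    (hδ : ((d : ℝ) + 1) * (d + 2) * (2 * d + 5) * 𝔼 y, 𝔼 h, lineDist d f y h < 1) :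
    ∃ g : MvPolynomial (Fin n) F, g.totalDegree ≤ d ∧
      𝔼 y, ind (f y ≠ eval y g) ≤ (d + 2) * (2 * d + 3) * 𝔼 y, 𝔼 h, lineDist d f y h := by
  classical
  set δ := 𝔼 y, 𝔼 h, lineDist d f y h with hδdef
  obtain ⟨e⟩ : Nonempty (Fin (d + 1) ↪ Fˣ) :=
    Function.Embedding.nonempty_of_card_le (by rw [Fintype.card_units]; simp; omega)
  set s : Fin (d + 1) → F := fun i => (e i : F) with hsdef
  have hs : Function.Injective s := fun i j hij => e.injective (Units.ext hij)
  have hs0 : ∀ i, s i ≠ 0 := fun i => (e i).ne_zero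
  -- The corrected value at `y`: the extrapolation along a direction agreeing with most others.
  have hmaj : ∀ y : Fin n → F, ∃ v : F, 𝔼 h, ind (v ≠ extrap s f 0 y h) ≤
      2 * (d + 1) * ((d + 2) * δ) := by
    intro y
    obtain ⟨h₁, -, hh₁⟩ := Finset.exists_le_of_expect_le Finset.univ_nonempty
      (extrap_disagree_le s hs hs0 f y)
    exact ⟨_, hh₁⟩
  choose g hg using hmaj
  have hline : ∀ (y h : Fin n → F) (t : F), g (y + t • h) = extrap s g t y h := by
    intro y h t
    by_contra hne
    have h1 : ∀ h₁ h₂ : Fin n → F, (1 : ℝ) ≤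
        ind (g (y + t • h) ≠ extrap s f 0 (y + t • h) (h₁ + t • h₂)) +
        ∑ k, ind (g (y + s k • h) ≠ extrap s f 0 (y + s k • h) (h₁ + s k • h₂)) +
        ∑ i, ind (f ((y + s i • h₁) + t • (h + s i • h₂)) ≠
          extrap s f t (y + s i • h₁) (h + s i • h₂)) := by
      intro h₁ h₂
      rw [← ind_true hne]
      refine le_trans (ind_le_add (Q := g (y + t • h) ≠ extrap s f 0 (y + t • h) (h₁ + t • h₂) ∨
        ∃ k, g (y + s k • h) ≠ extrap s f 0 (y + s k • h) (h₁ + s k • h₂))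
        (R := ∃ i, f ((y + s i • h₁) + t • (h + s i • h₂)) ≠
          extrap s f t (y + s i • h₁) (h + s i • h₂)) ?_)
        (add_le_add ((ind_le_add id).trans (add_le_add le_rfl (ind_exists_le _)))
          (ind_exists_le _))
      intro _
      by_contra! hcon
      obtain ⟨⟨ha, hb⟩, hc⟩ := hcon
      apply hne
      have hpt : ∀ (u : F) (i : Fin (d + 1)), y + u • h + s i • (h₁ + u • h₂) =
          (y + s i • h₁) + u • (h + s i • h₂) := by
        intro u i
        simp only [smul_add, smul_comm u (s i) h₂]
        abel
      rw [ha, extrap, extrap]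
      simp only [hb, hpt, hc]
      simp only [extrap, Finset.mul_sum, hpt]
      rw [Finset.sum_comm]
      refine Finset.sum_congr rfl fun i _ => Finset.sum_congr rfl fun j _ => ?_
      ring
    have h2 : ∀ u : F, 𝔼 h₁ : Fin n → F, 𝔼 h₂ : Fin n → F,
        ind (g (y + u • h) ≠ extrap s f 0 (y + u • h) (h₁ + u • h₂)) ≤
          2 * (d + 1) * ((d + 2) * δ) := by
      intro u
      rw [exp_comm]
      refine Finset.expect_le Finset.univ_nonempty fun h₂ _ => ?_
      rw [exp_shift (fun k => ind (g (y + u • h) ≠ extrap s f 0 (y + u • h) k)) (u • h₂)]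
      exact hg _
    have h3 : ∀ i, 𝔼 h₁ : Fin n → F, 𝔼 h₂ : Fin n → F,
        ind (f ((y + s i • h₁) + t • (h + s i • h₂)) ≠
          extrap s f t (y + s i • h₁) (h + s i • h₂)) ≤ (d + 2) * δ := by
      intro i
      have e1 : ∀ h₁ : Fin n → F, 𝔼 h₂ : Fin n → F,
          ind (f ((y + s i • h₁) + t • (h + s i • h₂)) ≠
            extrap s f t (y + s i • h₁) (h + s i • h₂)) =
          𝔼 h₂ : Fin n → F, ind (f ((y + s i • h₁) + t • h₂) ≠
            extrap s f t (y + s i • h₁) h₂) := fun h₁ =>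
        exp_affine (fun k => ind (f ((y + s i • h₁) + t • k) ≠ extrap s f t (y + s i • h₁) k))
          h (hs0 i)
      simp only [e1]
      rw [exp_affine (fun z => 𝔼 h₂ : Fin n → F, ind (f (z + t • h₂) ≠ extrap s f t z h₂)) y
        (hs0 i)]
      exact extrap_fail_le s hs f t
    have h4 : (1 : ℝ) ≤ 2 * (d + 1) * ((d + 2) * δ) +
        (d + 1) * (2 * (d + 1) * ((d + 2) * δ)) + (d + 1) * ((d + 2) * δ) := by
      calc (1 : ℝ) = 𝔼 _h₁ : Fin n → F, 𝔼 _h₂ : Fin n → F, (1 : ℝ) := by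
            simp only [Fintype.expect_const]
        _ ≤ _ := exp_mono fun h₁ => exp_mono fun h₂ => h1 h₁ h₂
        _ ≤ _ := by
            simp only [exp_add, exp_sum]
            refine add_le_add (add_le_add (h2 t) ?_) ?_
            · refine (Finset.sum_le_sum fun k _ => h2 (s k)).trans (le_of_eq ?_)
              simp only [Finset.sum_const, Finset.card_univ, Fintype.card_fin, nsmul_eq_mul]
              push_cast; ring
            · refine (Finset.sum_le_sum fun k _ => h3 k).trans (le_of_eq ?_)
              simp only [Finset.sum_const, Finset.card_univ, Fintype.card_fin, nsmul_eq_mul]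
              push_cast; ring
    have h5 : 2 * (d + 1) * ((d + 2) * δ) +
        (d + 1) * (2 * (d + 1) * ((d + 2) * δ)) + (d + 1) * ((d + 2) * δ) =
        ((d : ℝ) + 1) * (d + 2) * (2 * d + 5) * δ := by ring
    linarith
  obtain ⟨p, hp, hgp⟩ := exists_poly_of_lines (d := d) (by omega) n g fun y h => by
    refine ⟨∑ i, Polynomial.C (g (y + s i • h)) * Lagrange.basis Finset.univ s i, ?_, fun t => ?_⟩
    · refine Polynomial.natDegree_sum_le_of_forall_le _ _ fun i _ => ?_
      refine (Polynomial.natDegree_C_mul_le _ _).trans ?_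
      rw [Lagrange.natDegree_basis hs.injOn (Finset.mem_univ i)]
      simp
    · rw [hline, extrap, Polynomial.eval_finsetSum]
      refine Finset.sum_congr rfl fun i _ => ?_
      rw [Polynomial.eval_mul, Polynomial.eval_C, mul_comm]
  refine ⟨p, hp, ?_⟩
  have hB : 𝔼 y, 𝔼 h, ind (f y ≠ extrap s f 0 y h) ≤ (d + 2) * δ := by
    simpa only [zero_smul, add_zero] using extrap_fail_le s hs f 0
  calc 𝔼 y, ind (f y ≠ eval y p)
      = 𝔼 y, 𝔼 _h : Fin n → F, ind (f y ≠ g y) := by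
        simp only [Fintype.expect_const, hgp]
    _ ≤ 𝔼 y, 𝔼 h, (ind (f y ≠ extrap s f 0 y h) + ind (g y ≠ extrap s f 0 y h)) := by
        refine exp_mono fun y => exp_mono fun h => ind_le_add fun hne => ?_
        by_contra! hcon
        exact hne (hcon.1.trans hcon.2.symm)
    _ ≤ (d + 2) * δ + 2 * (d + 1) * ((d + 2) * δ) := by
        simp only [exp_add]
        exact add_le_add hB (Finset.expect_le Finset.univ_nonempty fun y _ => hg y)
    _ = _ := by ring

/-! ### Sampling by random 3-spaces -/

/-- All but a `2 / q` fraction of the triples of vectors in a space of dimension at least `3` are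
linearly independent. -/
lemma card_linearIndependent_ge {F V : Type*} [Field F] [Fintype F] [AddCommGroup V] [Module F V]
    [Fintype V] (hV : 3 ≤ Module.finrank F V) :
    (1 - 2 / (Fintype.card F : ℝ)) * (Fintype.card (Fin 3 → V) : ℝ) ≤
      (Nat.card {w : Fin 3 → V // LinearIndependent F w} : ℝ) := by
  rw [card_linearIndependent hV, Fintype.card_fun, Module.card_eq_pow_finrank (K := F) (V := V)]
  set q := Fintype.card F with hqdef
  have hq2 : 2 ≤ q := Fintype.one_lt_card
  set m := Module.finrank F V
  simp only [Fin.prod_univ_three, Fin.val_zero, Fin.val_one, Fin.val_two, Fintype.card_fin]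
  have hQ : q ^ 3 ≤ q ^ m := Nat.pow_le_pow_right (by omega) hV
  have hle : ∀ i ≤ 2, q ^ i ≤ q ^ m := fun i hi => Nat.pow_le_pow_right (by omega) (by omega)
  rw [Nat.cast_mul, Nat.cast_mul, Nat.cast_sub (hle 0 (by omega)), Nat.cast_sub (hle 1 (by omega)),
    Nat.cast_sub (hle 2 (by omega))]
  have hQ' : (q : ℝ) ^ 3 ≤ (q : ℝ) ^ m := by exact_mod_cast hQ
  push_cast
  have hqr : (2 : ℝ) ≤ q := by exact_mod_cast hq2
  generalize (q : ℝ) ^ m = Q at hQ' ⊢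
  generalize (q : ℝ) = r at hQ' hqr ⊢
  have hr0 : 0 < r := by linarith
  have hQ0 : 0 < Q := lt_of_lt_of_le (by positivity) hQ'
  have h1 : r ^ 2 ≤ Q / r := by rw [le_div_iff₀ hr0]; nlinarith
  have h2 : (1 - 2 / r) * Q ^ 3 = Q ^ 3 - 2 * (Q / r) * Q ^ 2 := by field_simp
  have h3 : 1 + r + r ^ 2 ≤ 2 * (Q / r) := by nlinarith
  rw [h2]
  have h4 : (1 + r + r ^ 2) * Q ^ 2 ≤ 2 * (Q / r) * Q ^ 2 := by gcongr
  have h5 : r ^ 3 ≤ (r + r ^ 2 + r ^ 3) * Q := by nlinarith [pow_pos hr0 2, pow_pos hr0 3]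
  nlinarith

lemma exp_ind_eq {α : Type*} [Fintype α] (P : α → Prop) :
    𝔼 a, ind (P a) = (Nat.card {a // P a} : ℝ) / Fintype.card α := by
  classical
  rw [Fintype.expect_eq_sum_div_card]
  congr 1
  rw [Nat.card_eq_fintype_card, Fintype.card_subtype]
  simp only [ind]
  rw [Finset.sum_ite]
  simp

lemma exp_dependent_le {F V : Type*} [Field F] [Fintype F] [AddCommGroup V] [Module F V]
    [Fintype V] (hV : 3 ≤ Module.finrank F V) :
    𝔼 w : Fin 3 → V, ind (¬ LinearIndependent F w) ≤ 2 / (Fintype.card F : ℝ) := by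
  have h := card_linearIndependent_ge (F := F) (V := V) hV
  have h1 : 𝔼 w : Fin 3 → V, (ind (LinearIndependent F w) + ind (¬ LinearIndependent F w)) = 1 := by
    rw [← Fintype.expect_const (ι := Fin 3 → V) (1 : ℝ)]
    refine exp_congr fun w => ?_
    by_cases hw : LinearIndependent F w
    · rw [ind_true hw, ind_false (not_not.2 hw)]; norm_num
    · rw [ind_false hw, ind_true hw]; norm_num
  rw [exp_add, exp_ind_eq] at h1
  have h2 : (1 - 2 / (Fintype.card F : ℝ)) ≤
      (Nat.card {w : Fin 3 → V // LinearIndependent F w} : ℝ) / Fintype.card (Fin 3 → V) := by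
    rwa [le_div_iff₀ (by exact_mod_cast Fintype.card_pos)]
  linarith

lemma exp_fin_three {α : Type*} [Fintype α] (φ : (Fin 3 → α) → ℝ) :
    𝔼 w, φ w = 𝔼 a, 𝔼 b, 𝔼 c, φ ![a, b, c] := by
  have e : 𝔼 w, φ w = 𝔼 p : α × α × α, φ ![p.1, p.2.1, p.2.2] := by
    refine Fintype.expect_equiv (⟨fun w => (w 0, w 1, w 2), fun p => ![p.1, p.2.1, p.2.2],
      fun w => ?_, fun p => rfl⟩ : (Fin 3 → α) ≃ α × α × α) _ _ fun w => ?_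
    · ext i; fin_cases i <;> rfl
    · congr 1; ext i; fin_cases i <;> rfl
  rw [e, ← Finset.univ_product_univ, Finset.expect_product]
  refine exp_congr fun a => ?_
  rw [← Finset.univ_product_univ, Finset.expect_product]

/-- Three linearly independent parameters index independent uniform points of a random
parametrised 3-space. -/
lemma exp_comb {F V : Type*} [Field F] [Fintype F] [AddCommGroup V] [Module F V]
    [Fintype V] (w : Fin 3 → (Fin 3 → F)) (hw : LinearIndependent F w) (φ : (Fin 3 → V) → ℝ) :
    𝔼 U : Fin 3 → V, φ (fun j => Fintype.linearCombination F U (w j)) = 𝔼 Y, φ Y := by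
  refine Fintype.expect_bijective (fun U j => Fintype.linearCombination F U (w j))
    (Finite.injective_iff_bijective.1 ?_) _ _ fun _ => rfl
  intro U U' hUU
  have hb : Fintype.linearCombination F U = Fintype.linearCombination F U' := by
    refine (basisOfLinearIndependentOfCardEqFinrank hw (by simp)).ext fun j => ?_
    rw [coe_basisOfLinearIndependentOfCardEqFinrank]
    exact congrFun hUU j
  ext i
  have := LinearMap.congr_fun hb (Pi.single i 1)
  simpa [Fintype.linearCombination_apply_single] using this

/-- Sampling by random 3-spaces. If `Z (·, h)` has mean zero for every direction `h`, then its
average over a random parametrised 3-space has second moment at most `2 / q`: expanding the square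
gives triples of parameters, and the linearly independent ones contribute nothing. -/
lemma sampling {F V : Type*} [Field F] [Fintype F] [AddCommGroup V] [Module F V]
    [Fintype V] (Z : V → V → ℝ) (hZ1 : ∀ y h, |Z y h| ≤ 1) (hZ0 : ∀ h, 𝔼 y, Z y h = 0) :
    𝔼 U : Fin 3 → V, (𝔼 b : Fin 3 → F, 𝔼 a : Fin 3 → F,
      Z (Fintype.linearCombination F U a) (Fintype.linearCombination F U b)) ^ 2
      ≤ 2 / (Fintype.card F : ℝ) := by
  set L : (Fin 3 → V) → (Fin 3 → F) → V := fun U a => Fintype.linearCombination F U a with hL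
  have hjensen : ∀ φ : (Fin 3 → F) → ℝ, (𝔼 b, φ b) ^ 2 ≤ 𝔼 b, φ b ^ 2 := by
    intro φ
    have := Finset.expect_mul_sq_le_sq_mul_sq (Finset.univ) φ (fun _ : Fin 3 → F => (1 : ℝ))
    simpa using this
  have hindep : ∀ w : Fin 3 → (Fin 3 → F), 𝔼 U, Z (L U (w 0)) (L U (w 2)) *
      Z (L U (w 1)) (L U (w 2)) ≤ ind (¬ LinearIndependent F w) := by
    intro w
    by_cases hw : LinearIndependent F w
    · rw [ind_false (not_not.2 hw)]
      refine le_of_eq ?_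
      rw [exp_comb w hw (fun Y => Z (Y 0) (Y 2) * Z (Y 1) (Y 2))]
      rw [exp_fin_three, exp_comm]
      refine Finset.expect_eq_zero fun b _ => ?_
      rw [exp_comm]
      refine Finset.expect_eq_zero fun c _ => ?_
      have : 𝔼 a, Z a c * Z b c = 0 := by rw [← Finset.expect_mul, hZ0, zero_mul]
      exact this
    · rw [ind_true hw]
      refine Finset.expect_le Finset.univ_nonempty fun U _ => ?_
      refine (le_abs_self _).trans ?_
      rw [abs_mul]
      exact mul_le_one₀ (hZ1 _ _) (abs_nonneg _) (hZ1 _ _)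
  calc _ ≤ 𝔼 U : Fin 3 → V, 𝔼 b : Fin 3 → F, (𝔼 a : Fin 3 → F, Z (L U a) (L U b)) ^ 2 :=
        exp_mono fun U => hjensen _
    _ = 𝔼 U : Fin 3 → V, 𝔼 w : Fin 3 → (Fin 3 → F), Z (L U (w 0)) (L U (w 2)) *
          Z (L U (w 1)) (L U (w 2)) := by
        refine exp_congr fun U => ?_
        rw [exp_fin_three (fun w : Fin 3 → (Fin 3 → F) => Z (L U (w 0)) (L U (w 2)) *
          Z (L U (w 1)) (L U (w 2)))]
        simp only [sq, Finset.expect_mul_expect]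
        exact (exp_comm _).trans (exp_congr fun a => exp_comm _)
    _ = 𝔼 w : Fin 3 → (Fin 3 → F), 𝔼 U : Fin 3 → V, Z (L U (w 0)) (L U (w 2)) *
          Z (L U (w 1)) (L U (w 2)) := exp_comm _
    _ ≤ 𝔼 w : Fin 3 → (Fin 3 → F), ind (¬ LinearIndependent F w) := exp_mono hindep
    _ ≤ _ := exp_dependent_le (by simp)

/-- Both the direction and the base point of a line are sampled well by a random parametrised
3-space through `x`: first the mean over base points is sampled by the direction, then the base
point is sampled for each fixed direction. -/
lemma sampling_lines {F V : Type*} [Field F] [Fintype F] [AddCommGroup V] [Module F V]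
    [Fintype V] (x : V) (G : V → V → ℝ) (hG0 : ∀ y h, 0 ≤ G y h) (hG1 : ∀ y h, G y h ≤ 1) :
    𝔼 U : Fin 3 → V, ((𝔼 b : Fin 3 → F, 𝔼 a : Fin 3 → F,
      G (x + Fintype.linearCombination F U a) (Fintype.linearCombination F U b)) -
      𝔼 y, 𝔼 h, G y h) ^ 2 ≤ 8 / (Fintype.card F : ℝ) := by
  set μ := 𝔼 y, 𝔼 h, G y h with hμ
  set D : V → ℝ := fun h => 𝔼 y, G y h with hD
  have hD0 : ∀ h, 0 ≤ D h := fun h => Finset.expect_nonneg fun y _ => hG0 y h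
  have hD1 : ∀ h, D h ≤ 1 := fun h => Finset.expect_le Finset.univ_nonempty fun y _ => hG1 y h
  have hμD : μ = 𝔼 h, D h := exp_comm _
  have hμ0 : 0 ≤ μ := by rw [hμD]; exact Finset.expect_nonneg fun h _ => hD0 h
  have hμ1 : μ ≤ 1 := by rw [hμD]; exact Finset.expect_le Finset.univ_nonempty fun h _ => hD1 h
  have s1 := sampling (F := F) (fun h _ => D h - μ)
    (fun h _ => abs_le.2 ⟨by linarith [hD0 h], by linarith [hD1 h]⟩)
    (fun _ => by rw [Finset.expect_sub_distrib, Fintype.expect_const, hμD, sub_self])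
  have s2 := sampling (F := F) (fun y h => G (x + y) h - D h)
    (fun y h => abs_le.2 ⟨by linarith [hD1 h, hG0 (x + y) h], by linarith [hD0 h, hG1 (x + y) h]⟩)
    (fun h => by
      rw [Finset.expect_sub_distrib, Fintype.expect_const]
      simp only [add_comm x]
      rw [exp_shift (fun y => G y h) x, sub_self])
  calc _ ≤ 𝔼 U : Fin 3 → V, (2 * (𝔼 b : Fin 3 → F, 𝔼 a : Fin 3 → F,
        (D (Fintype.linearCombination F U a) - μ)) ^ 2 + 2 * (𝔼 b : Fin 3 → F, 𝔼 a : Fin 3 → F,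
        (G (x + Fintype.linearCombination F U a) (Fintype.linearCombination F U b) -
          D (Fintype.linearCombination F U b))) ^ 2) := by
        refine exp_mono fun U => ?_
        simp only [Finset.expect_sub_distrib, Fintype.expect_const]
        nlinarith [sq_nonneg ((𝔼 a : Fin 3 → F, D (Fintype.linearCombination F U a) - μ) -
          (𝔼 b : Fin 3 → F, 𝔼 a : Fin 3 → F,
            G (x + Fintype.linearCombination F U a) (Fintype.linearCombination F U b) -
            𝔼 b : Fin 3 → F, D (Fintype.linearCombination F U b)))]
    _ ≤ 2 * (2 / (Fintype.card F : ℝ)) + 2 * (2 / (Fintype.card F : ℝ)) := by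
        rw [exp_add, ← Finset.mul_expect, ← Finset.mul_expect]
        linarith
    _ = _ := by ring

lemma sampling_points {F V : Type*} [Field F] [Fintype F] [AddCommGroup V] [Module F V]
    [Fintype V] (x : V) (φ : V → ℝ) (hφ0 : ∀ y, 0 ≤ φ y) (hφ1 : ∀ y, φ y ≤ 1) :
    𝔼 U : Fin 3 → V, ((𝔼 a : Fin 3 → F, φ (x + Fintype.linearCombination F U a)) -
      𝔼 y, φ y) ^ 2 ≤ 2 / (Fintype.card F : ℝ) := by
  set μ := 𝔼 y, φ y with hμ
  have hμ0 : 0 ≤ μ := Finset.expect_nonneg fun h _ => hφ0 h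
  have hμ1 : μ ≤ 1 := Finset.expect_le Finset.univ_nonempty fun h _ => hφ1 h
  have s := sampling (F := F) (fun y _ => φ (x + y) - μ)
    (fun y _ => abs_le.2 ⟨by linarith [hφ0 (x + y)], by linarith [hφ1 (x + y)]⟩)
    (fun _ => by
      rw [Finset.expect_sub_distrib, Fintype.expect_const]
      simp only [add_comm x]
      rw [exp_shift φ x, sub_self])
  simpa only [Fintype.expect_const, Finset.expect_sub_distrib] using s


/-! ### Cubes through a point -/

/-- The affine span of `x`, `x + U 0`, `x + U 1`, `x + U 2`; a cube when `U` is independent. -/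
def cubeOf {F : Type} [Field F] {n : ℕ} (x : Fin n → F) (U : Fin 3 → (Fin n → F)) :
    AffineSubspace F (Fin n → F) :=
  AffineSubspace.mk' x (Submodule.span F (Set.range U))

lemma mem_cubeOf_iff {F : Type} [Field F] {n : ℕ} (x : Fin n → F) (U : Fin 3 → (Fin n → F))
    (z : Fin n → F) :
    z ∈ cubeOf x U ↔ ∃ a, x + Fintype.linearCombination F U a = z := by
  rw [cubeOf, AffineSubspace.mem_mk', ← Fintype.range_linearCombination, vsub_eq_sub]
  constructor
  · rintro ⟨a, ha⟩; exact ⟨a, by rw [ha]; abel⟩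
  · rintro ⟨a, ha⟩; exact ⟨a, by rw [← ha]; abel⟩

/-- Counting in a cube is averaging over its three parameters. -/
lemma ncard_cube {F : Type} [Field F] [Fintype F] {n : ℕ} (x : Fin n → F)
    (U : Fin 3 → (Fin n → F)) (hU : LinearIndependent F U) (P : (Fin n → F) → Prop) :
    (({z ∈ (cubeOf x U : Set (Fin n → F)) | P z}).ncard : ℝ) =
      (Fintype.card F : ℝ) ^ 3 * 𝔼 a : Fin 3 → F, ind (P (x + Fintype.linearCombination F U a)) := by
  have himg : {z ∈ (cubeOf x U : Set (Fin n → F)) | P z} =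
      (fun a => x + Fintype.linearCombination F U a) ''
        {a | P (x + Fintype.linearCombination F U a)} := by
    ext z
    simp only [Set.mem_ofPred_eq, SetLike.mem_coe, mem_cubeOf_iff, Set.mem_image]
    constructor
    · rintro ⟨⟨a, rfl⟩, hP⟩; exact ⟨a, hP, rfl⟩
    · rintro ⟨a, hP, rfl⟩; exact ⟨⟨a, rfl⟩, hP⟩
  have hinj : Function.Injective (fun a => x + Fintype.linearCombination F U a) := by
    intro a b hab
    exact (linearIndependent_iff_injective_fintypeLinearCombination.1 hU) (add_left_cancel hab)
  rw [himg, Set.ncard_image_of_injective _ hinj, exp_ind_eq]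
  have h0 : (Fintype.card F : ℝ) ≠ 0 := by exact_mod_cast Fintype.card_ne_zero
  rw [Fintype.card_fun, Fintype.card_fin, ← Nat.card_coe_set_eq]
  push_cast
  rw [mul_div_cancel₀ _ (by positivity)]
  rfl

/-- Every cube through `x` has the same number of parametrisations by independent triples. -/
lemma card_param {F : Type} [Field F] [Fintype F] {n : ℕ} (x : Fin n → F)
    (S : Set (AffineSubspace F (Fin n → F))) (hS : S ⊆ cubesOn F n x) :
    Nat.card {U : Fin 3 → (Fin n → F) // LinearIndependent F U ∧ cubeOf x U ∈ S} =
      (∏ i : Fin 3, (Fintype.card F ^ 3 - Fintype.card F ^ (i : ℕ))) * S.ncard := by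
  classical
  have : Fintype (AffineSubspace F (Fin n → F)) := Fintype.ofFinite _
  have hfib : ∀ C ∈ S, Nat.card {U : Fin 3 → (Fin n → F) //
      LinearIndependent F U ∧ cubeOf x U = C} =
        ∏ i : Fin 3, (Fintype.card F ^ 3 - Fintype.card F ^ (i : ℕ)) := by
    intro C hC
    obtain ⟨⟨-, hdim⟩, hx⟩ := hS hC
    have hcard := card_linearIndependent (K := F) (V := C.direction) (k := 3) hdim.ge
    rw [hdim] at hcard
    rw [← hcard]
    refine Nat.card_congr ⟨fun U => ⟨fun i => ⟨U.1 i, ?_⟩, ?_⟩,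
      fun s => ⟨fun i => s.1 i, ?_, ?_⟩, fun U => rfl, fun s => rfl⟩
    · have h : U.1 i ∈ (cubeOf x U.1).direction := by
        rw [cubeOf, AffineSubspace.direction_mk']
        exact Submodule.subset_span ⟨i, rfl⟩
      rwa [U.2.2] at h
    · exact LinearIndependent.of_comp C.direction.subtype U.2.1
    · exact s.2.map' C.direction.subtype (Submodule.ker_subtype _)
    · have hli := s.2.map' C.direction.subtype (Submodule.ker_subtype _)
      have hspan : Submodule.span F (Set.range fun i => ((s.1 i : C.direction) : Fin n → F)) =
          C.direction := by
        refine Submodule.eq_of_le_of_finrank_eq (Submodule.span_le.2 ?_) ?_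
        · rintro _ ⟨i, rfl⟩; exact (s.1 i).2
        · rw [hdim]; exact (finrank_span_eq_card hli).trans (by simp)
      rw [cubeOf, hspan]
      exact AffineSubspace.mk'_eq hx
  have e : {U : Fin 3 → (Fin n → F) // LinearIndependent F U ∧ cubeOf x U ∈ S} ≃
      (Σ C : S, {U : Fin 3 → (Fin n → F) // LinearIndependent F U ∧ cubeOf x U = C}) :=
    ⟨fun U => ⟨⟨cubeOf x U.1, U.2.2⟩, ⟨U.1, U.2.1, rfl⟩⟩,
      fun p => ⟨p.2.1, p.2.2.1, by rw [p.2.2.2]; exact p.1.2⟩, fun U => rfl, by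
        rintro ⟨⟨C, hC⟩, ⟨U, hU, hUC⟩⟩
        dsimp only at hUC
        subst hUC
        rfl⟩
  rw [Nat.card_congr e, Nat.card_sigma]
  rw [Finset.sum_congr rfl fun C _ => hfib C.1 C.2]
  rw [Finset.sum_const, smul_eq_mul, mul_comm, Finset.card_univ,
    ← Nat.card_eq_fintype_card (α := S), Nat.card_coe_set_eq]

/-- Chebyshev over parametrised cubes: a statistic with small second moment is small on some cube
of any family that is not too sparse among the cubes through `x`. -/
lemma exists_good_cube {F : Type} [Field F] [Fintype F] {n : ℕ} (hn : 3 ≤ n) (x : Fin n → F)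
    (S : Set (AffineSubspace F (Fin n → F))) (hS : S ⊆ cubesOn F n x) (e : ℝ) (he : 0 ≤ e)
    (hSe : e * ((cubesOn F n x).ncard : ℝ) ≤ (S.ncard : ℝ))
    (Φ : (Fin 3 → (Fin n → F)) → ℝ) (k κ : ℝ) (hΦ : 𝔼 U, Φ U ^ 2 ≤ k)
    (hk : k < κ ^ 2 * (e * (1 - 2 / (Fintype.card F : ℝ)))) :
    ∃ U, LinearIndependent F U ∧ cubeOf x U ∈ S ∧ Φ U ^ 2 ≤ κ ^ 2 := by
  by_contra! hcon
  have h1 : ∀ U, κ ^ 2 * ind (LinearIndependent F U ∧ cubeOf x U ∈ S) ≤ Φ U ^ 2 := by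
    intro U
    by_cases h : LinearIndependent F U ∧ cubeOf x U ∈ S
    · rw [ind_true h, mul_one]; exact (hcon U h.1 h.2).le
    · rw [ind_false h, mul_zero]; exact sq_nonneg _
  have h2 := (exp_mono h1).trans hΦ
  rw [← Finset.mul_expect, exp_ind_eq, card_param x S hS] at h2
  have hall : ∀ U : Fin 3 → (Fin n → F), LinearIndependent F U → cubeOf x U ∈ cubesOn F n x := by
    intro U hU
    refine ⟨⟨⟨x, AffineSubspace.self_mem_mk' _ _⟩, ?_⟩, AffineSubspace.self_mem_mk' _ _⟩
    rw [cubeOf, AffineSubspace.direction_mk', finrank_span_eq_card hU, Fintype.card_fin]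
  have h3 := card_linearIndependent_ge (F := F) (V := Fin n → F) (by simpa using hn)
  have h4 : Nat.card {U : Fin 3 → (Fin n → F) // LinearIndependent F U} =
      (∏ i : Fin 3, (Fintype.card F ^ 3 - Fintype.card F ^ (i : ℕ))) * (cubesOn F n x).ncard := by
    rw [← card_param x _ subset_rfl]
    refine Nat.card_congr (Equiv.subtypeEquivRight fun U => ?_)
    exact ⟨fun h => ⟨h, hall U h⟩, fun h => h.1⟩
  rw [h4] at h3
  set N := ∏ i : Fin 3, (Fintype.card F ^ 3 - Fintype.card F ^ (i : ℕ))
  have hpos : (0 : ℝ) < Fintype.card (Fin 3 → (Fin n → F)) := by exact_mod_cast Fintype.card_pos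
  have h5 : e * (1 - 2 / (Fintype.card F : ℝ)) ≤
      ((N * S.ncard : ℕ) : ℝ) / Fintype.card (Fin 3 → (Fin n → F)) := by
    rw [le_div_iff₀ hpos, mul_assoc]
    refine (mul_le_mul_of_nonneg_left h3 he).trans ?_
    push_cast
    have := mul_le_mul_of_nonneg_left hSe (Nat.cast_nonneg (α := ℝ) N)
    linarith
  have h6 := mul_le_mul_of_nonneg_left h5 (sq_nonneg κ)
  linarith

/-- Two polynomials of degree at most `d` that differ at one point of a parametrised 3-space agree
on at most a `(d + 1) / q` fraction of it: each line through that point has at most `d` agreements,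
and the extra `1 / q` pays for the parameter `0` on those lines. -/
lemma exp_agree_le {F : Type} [Field F] [Fintype F] {n d : ℕ} (x : Fin n → F)
    (U : Fin 3 → (Fin n → F)) (p g : MvPolynomial (Fin n) F) (hp : p.totalDegree ≤ d)
    (hg : g.totalDegree ≤ d) (a₀ : Fin 3 → F)
    (hne : eval (x + Fintype.linearCombination F U a₀) p ≠
      eval (x + Fintype.linearCombination F U a₀) g) :
    𝔼 a : Fin 3 → F, ind (eval (x + Fintype.linearCombination F U a) p =
      eval (x + Fintype.linearCombination F U a) g) ≤ (d + 1) / (Fintype.card F : ℝ) := by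
  classical
  set A : (Fin 3 → F) → Prop := fun a => eval (x + Fintype.linearCombination F U a) p =
      eval (x + Fintype.linearCombination F U a) g with hA
  have hroots : ∀ b : Fin 3 → F, 𝔼 t : F, ind (A (a₀ + t • b)) ≤ d / (Fintype.card F : ℝ) := by
    intro b
    obtain ⟨r, hr, hrt⟩ := lineRestrict (p - g) (x + Fintype.linearCombination F U a₀)
      (Fintype.linearCombination F U b)
    have hrA : ∀ t, A (a₀ + t • b) ↔ r.eval t = 0 := by
      intro t
      rw [hrt, hA]
      simp only [map_add, map_smul, map_sub, add_assoc]
      exact sub_eq_zero.symm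
    have hr0 : r ≠ 0 := by
      rintro rfl
      have := (hrA 0).2 (by simp)
      rw [zero_smul, add_zero] at this
      exact hne this
    have hsub : (Finset.univ.filter fun t => A (a₀ + t • b)) ⊆ r.roots.toFinset := by
      intro t ht
      rw [Multiset.mem_toFinset, Polynomial.mem_roots hr0]
      exact (hrA t).1 (Finset.mem_filter.1 ht).2
    have hcard : (Finset.univ.filter fun t => A (a₀ + t • b)).card ≤ d :=
      (Finset.card_le_card hsub).trans <| (Multiset.toFinset_card_le _).trans <|
        (Polynomial.card_roots' r).trans <| hr.trans <| (totalDegree_sub _ _).trans (max_le hp hg)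
    rw [exp_ind_eq, Nat.card_eq_fintype_card, Fintype.card_subtype]
    gcongr
  have hzero : 𝔼 t : F, ind (t = 0) = 1 / (Fintype.card F : ℝ) := by
    rw [exp_ind_eq]; simp
  have hpt : ∀ t : F, 𝔼 a, ind (A a) ≤ 𝔼 b, ind (A (a₀ + t • b)) + ind (t = 0) := by
    intro t
    by_cases ht : t = 0
    · rw [ind_true ht]
      have h1 : 𝔼 a, ind (A a) ≤ 1 :=
        Finset.expect_le Finset.univ_nonempty fun _ _ => ind_le_one _
      have h2 : 0 ≤ 𝔼 b, ind (A (a₀ + t • b)) := Finset.expect_nonneg fun _ _ => ind_nonneg _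
      linarith
    · rw [exp_affine (fun a => ind (A a)) a₀ ht]
      linarith [ind_nonneg (t = 0)]
  calc 𝔼 a, ind (A a) = 𝔼 _t : F, 𝔼 a, ind (A a) := by rw [Fintype.expect_const]
    _ ≤ 𝔼 t : F, (𝔼 b, ind (A (a₀ + t • b)) + ind (t = 0)) := exp_mono hpt
    _ = 𝔼 b, 𝔼 t : F, ind (A (a₀ + t • b)) + 1 / (Fintype.card F : ℝ) := by
        rw [exp_add, exp_comm, hzero]
    _ ≤ d / (Fintype.card F : ℝ) + 1 / (Fintype.card F : ℝ) :=
        add_le_add (Finset.expect_le Finset.univ_nonempty fun b _ => hroots b) le_rfl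
    _ = _ := by ring

/-- In a cube where `f` is close to a polynomial `p` of degree at most `d`, the lines are on
average as close to degree `d` as the cube itself, since a uniform point of a uniform line of the
cube is uniform in it. -/
lemma exp_lineDist_cube_le {F : Type} [Field F] [Fintype F] {n d : ℕ} (x : Fin n → F)
    (U : Fin 3 → (Fin n → F)) (f : (Fin n → F) → F) (p : MvPolynomial (Fin n) F)
    (hp : p.totalDegree ≤ d) :
    𝔼 b : Fin 3 → F, 𝔼 a : Fin 3 → F,
      lineDist d f (x + Fintype.linearCombination F U a) (Fintype.linearCombination F U b) ≤
    𝔼 a : Fin 3 → F, ind (f (x + Fintype.linearCombination F U a) ≠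
      eval (x + Fintype.linearCombination F U a) p) := by
  set A : (Fin 3 → F) → Prop := fun a => f (x + Fintype.linearCombination F U a) ≠
      eval (x + Fintype.linearCombination F U a) p with hA
  refine Finset.expect_le Finset.univ_nonempty fun b _ => ?_
  calc _ ≤ 𝔼 a : Fin 3 → F, 𝔼 t : F, ind (A (a + t • b)) := by
        refine exp_mono fun a => ?_
        obtain ⟨r, hr, hrt⟩ := lineRestrict p (x + Fintype.linearCombination F U a)
          (Fintype.linearCombination F U b)
        refine (lineDist_le d f _ _ r (hr.trans hp)).trans (le_of_eq ?_)
        refine exp_congr fun t => ?_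
        rw [hrt, hA]
        simp only [map_add, map_smul, add_assoc]
    _ = 𝔼 _t : F, 𝔼 a, ind (A a) := by
        rw [exp_comm]
        exact exp_congr fun t => exp_shift (fun a => ind (A a)) (t • b)
    _ = _ := Fintype.expect_const _

lemma exp_not {α : Type*} [Fintype α] [Nonempty α] (P : α → Prop) :
    𝔼 a, ind (¬ P a) = 1 - 𝔼 a, ind (P a) := by
  rw [← Fintype.expect_const (ι := α) (1 : ℝ), ← Finset.expect_sub_distrib]
  refine exp_congr fun a => ?_
  by_cases h : P a
  · rw [ind_true h, ind_false (not_not.2 h)]; norm_num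
  · rw [ind_false h, ind_true h]; norm_num

end CubeTest

/-- If `f : F_q^n → F_q` is `2γ`-close to `T(C)` on at least an `ε/10`
fraction of the cubes through `x`, then `f` is `4dγ`-close to a polynomial of total degree at
most `d`. -/
theorem close_to_degree_d {F : Type} [Field F] [Fintype F] {n d : ℕ}
    (hn : 6 ≤ n) (hd : 1 ≤ d)
    (hq : (11 * d : ℝ) < (Fintype.card F : ℝ) ^ ((1 : ℝ) / 9))
    (T : AffineSubspace F (Fin n → F) → (Fin n → F) → F)
    (hT : DegTable F n d T)
    (hε : 10 ^ 7 * (d : ℝ) ^ 6 / (Fintype.card F : ℝ) ≤ epsT F n T)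
    (x : Fin n → F) (f : (Fin n → F) → F)
    (hf : (epsT F n T / 10) * ((cubesOn F n x).ncard : ℝ) ≤
      ({C ∈ cubesOn F n x | (1 - 2 * gam d) * ((C : Set (Fin n → F)).ncard : ℝ) ≤
        ({z ∈ (C : Set (Fin n → F)) | T C z = f z}.ncard : ℝ)}.ncard : ℝ)) :
    ∃ g : MvPolynomial (Fin n) F, g.totalDegree ≤ d ∧
      (1 - 4 * (d : ℝ) * gam d) * (Fintype.card F : ℝ) ^ n ≤
        (({z : Fin n → F | f z = eval z g}).ncard : ℝ) := by
  open CubeTest BigOperators in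
  set q : ℝ := (Fintype.card F : ℝ) with hqdef
  have hd1 : (1 : ℝ) ≤ d := by exact_mod_cast hd
  have hq0 : 0 < q := by rw [hqdef]; exact_mod_cast Fintype.card_pos
  have hqbig : 1000 * (d : ℝ) ≤ q := by
    have h1 : (q ^ ((1 : ℝ) / 9)) ^ 9 = q := by
      rw [← Real.rpow_natCast, ← Real.rpow_mul hq0.le]; norm_num
    have h2 : (11 * (d : ℝ)) ^ 9 ≤ q := by
      rw [← h1]; exact pow_le_pow_left₀ (by positivity) hq.le 9
    have h3 : (d : ℝ) ≤ (d : ℝ) ^ 9 := le_self_pow₀ hd1 (by norm_num)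
    nlinarith
  have hd3 : (1 : ℝ) ≤ (d : ℝ) ^ 3 := one_le_pow₀ hd1
  set γ := gam d with hγdef
  have hγ : γ * (1000 * (d : ℝ) ^ 3) = 1 := by
    rw [hγdef, gam]; field_simp
  have hγ0 : 0 < γ := by rw [hγdef, gam]; positivity
  have hγ1 : γ ≤ 1 / 1000 := by nlinarith
  set e := epsT F n T / 10 with hedef
  have he : 10 ^ 6 * (d : ℝ) ^ 6 / q ≤ e := by
    rw [hedef, le_div_iff₀ (by norm_num : (0 : ℝ) < 10)]
    refine le_trans (le_of_eq ?_) hε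
    ring
  have he0 : 0 ≤ e := le_trans (by positivity) he
  -- `γ` is chosen so that a density `ε / 10` of cubes beats a variance of order `1 / q`.
  have heγ : 1 / q ≤ γ ^ 2 * e := by
    refine le_trans (le_of_eq ?_) (mul_le_mul_of_nonneg_left he (sq_nonneg γ))
    have : γ ^ 2 * (10 ^ 6 * (d : ℝ) ^ 6) = 1 := by
      calc γ ^ 2 * (10 ^ 6 * (d : ℝ) ^ 6) = (γ * (1000 * (d : ℝ) ^ 3)) ^ 2 := by ring
        _ = 1 := by rw [hγ]; norm_num
    rw [← mul_div_assoc, this]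
  have hcheb : ∀ k c : ℝ, 0 ≤ c → k < c ^ 2 * (998 / 1000) →
      k / q < (c * γ) ^ 2 * (e * (1 - 2 / q)) := by
    intro k c _ hkc
    have h1 : 998 / 1000 ≤ 1 - 2 / q := by
      have : 2 / q ≤ 2 / 1000 := by
        apply div_le_div_of_nonneg_left <;> linarith
      linarith
    calc k / q < c ^ 2 * (998 / 1000) / q := by gcongr
      _ = c ^ 2 * (1 / q) * (998 / 1000) := by ring
      _ ≤ c ^ 2 * (γ ^ 2 * e) * (1 - 2 / q) := by gcongr
      _ = _ := by ring
  set S := {C ∈ cubesOn F n x | (1 - 2 * gam d) * ((C : Set (Fin n → F)).ncard : ℝ) ≤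
        ({z ∈ (C : Set (Fin n → F)) | T C z = f z}.ncard : ℝ)} with hSdef
  have hSsub : S ⊆ cubesOn F n x := fun C hC => hC.1
  have hgood : ∀ U : Fin 3 → (Fin n → F), LinearIndependent F U → cubeOf x U ∈ S →
      ∃ p : MvPolynomial (Fin n) F, p.totalDegree ≤ d ∧
        𝔼 a : Fin 3 → F, ind (f (x + Fintype.linearCombination F U a) ≠
          eval (x + Fintype.linearCombination F U a) p) ≤ 2 * γ := by
    intro U hU hUS
    obtain ⟨p, hp, hpT⟩ := hT _ hUS.1.1
    refine ⟨p, hp, ?_⟩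
    have h1 := hUS.2
    have h2 := ncard_cube x U hU (fun _ => True)
    have h3 := ncard_cube x U hU (fun z => T (cubeOf x U) z = f z)
    simp only [and_true, SetLike.mem_coe] at h2
    rw [h3] at h1
    have h4 : ((cubeOf x U : Set (Fin n → F)).ncard : ℝ) = q ^ 3 := by
      refine Eq.trans ?_ (h2.trans ?_)
      · rfl
      · simp only [ind_true trivial, Fintype.expect_const, mul_one]; rfl
    rw [h4, mul_comm] at h1
    have h5 := le_of_mul_le_mul_left h1 (by positivity)
    have h6 : 𝔼 a : Fin 3 → F, ind (f (x + Fintype.linearCombination F U a) ≠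
          eval (x + Fintype.linearCombination F U a) p) =
        1 - 𝔼 a : Fin 3 → F, ind (T (cubeOf x U) (x + Fintype.linearCombination F U a) =
          f (x + Fintype.linearCombination F U a)) := by
      rw [← exp_not]
      refine exp_congr fun a => ?_
      rw [hpT _ ((mem_cubeOf_iff x U _).2 ⟨a, rfl⟩)]
      congr 1
      exact propext ⟨Ne.symm, Ne.symm⟩
    rw [h6]
    linarith
  -- A typical good cube shows that a random line of the whole space is close to degree `d`.
  have hδ : 𝔼 y, 𝔼 h, lineDist d f y h ≤ 5 * γ := by
    obtain ⟨U, hU, hUS, hdev⟩ := exists_good_cube (by omega) x S hSsub e he0 hf _ (8 / q) (3 * γ)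
      (sampling_lines x (lineDist d f) (lineDist_nonneg d f) (lineDist_le_one d f))
      (hcheb 8 3 (by norm_num) (by norm_num))
    obtain ⟨p, hp, hpf⟩ := hgood U hU hUS
    have h1 := (exp_lineDist_cube_le x U f p hp).trans hpf
    have h2 := (abs_le_of_sq_le_sq' hdev (by positivity)).1
    linarith
  have hd2 : (d : ℝ) ≤ (d : ℝ) ^ 2 := le_self_pow₀ hd1 (by norm_num)
  have hd23 : (d : ℝ) ^ 2 ≤ (d : ℝ) ^ 3 := pow_le_pow_right₀ hd1 (by norm_num)
  have hδ0 : 0 ≤ 𝔼 y, 𝔼 h, lineDist d f y h :=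
    Finset.expect_nonneg fun y _ => Finset.expect_nonneg fun h _ => lineDist_nonneg d f y h
  obtain ⟨g, hg, hfg⟩ := close_of_lineDist (d := d) f
    (by have : (2 * d + 2 : ℝ) ≤ q := by linarith
        rw [hqdef] at this
        exact_mod_cast this) (by
      have h1 : ((d : ℝ) + 1) * (d + 2) * (2 * d + 5) ≤ 42 * (d : ℝ) ^ 3 := by nlinarith
      calc _ ≤ 42 * (d : ℝ) ^ 3 * (5 * γ) := by gcongr
        _ < 1 := by linarith)
  set β := 𝔼 y, ind (f y ≠ eval y g) with hβ
  have hβ1 : β ≤ 1 / 10 := by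
    have h1 : ((d : ℝ) + 2) * (2 * d + 3) ≤ 15 * (d : ℝ) ^ 3 := by nlinarith
    calc β ≤ _ := hfg
      _ ≤ 15 * (d : ℝ) ^ 3 * (5 * γ) := by gcongr
      _ ≤ _ := by linarith
  -- A typical good cube, on which the table entry must be `g`, improves the distance to `O(γ)`.
  have hβ2 : β ≤ 4 * γ := by
    obtain ⟨U, hU, hUS, hdev⟩ := exists_good_cube (by omega) x S hSsub e he0 hf _ (2 / q)
      (3 / 2 * γ) (sampling_points x (fun y => ind (f y ≠ eval y g)) (fun y => ind_nonneg _)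
        (fun y => ind_le_one _))
      (hcheb 2 (3 / 2) (by norm_num) (by norm_num))
    obtain ⟨p, hp, hpf⟩ := hgood U hU hUS
    have hdev' := abs_le_of_sq_le_sq' hdev (by positivity)
    have heq : ∀ a : Fin 3 → F, eval (x + Fintype.linearCombination F U a) p =
        eval (x + Fintype.linearCombination F U a) g := by
      intro a₀
      by_contra hne
      have h1 := exp_agree_le x U p g hp hg a₀ hne
      have h2 : 𝔼 a : Fin 3 → F, ind (¬ (eval (x + Fintype.linearCombination F U a) p =
          eval (x + Fintype.linearCombination F U a) g)) ≤
          𝔼 a : Fin 3 → F, (ind (f (x + Fintype.linearCombination F U a) ≠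
            eval (x + Fintype.linearCombination F U a) p) +
            ind (f (x + Fintype.linearCombination F U a) ≠
            eval (x + Fintype.linearCombination F U a) g)) := by
        refine exp_mono fun a => ind_le_add fun h => ?_
        by_contra! hcon
        exact h (hcon.1.symm.trans hcon.2)
      rw [exp_not, exp_add] at h2
      have h3 : ((d : ℝ) + 1) / q ≤ 1 / 2 := by
        rw [div_le_iff₀ hq0]; linarith
      linarith [hdev'.2]
    simp only [heq] at hpf
    linarith [hdev'.1]
  refine ⟨g, hg, ?_⟩
  have h1 := exp_not (fun y : Fin n → F => f y = eval y g)
  rw [exp_ind_eq (fun y : Fin n → F => f y = eval y g), Fintype.card_fun, Fintype.card_fin] at h1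
  have h2 : (1 - β) * q ^ n = (({z : Fin n → F | f z = eval z g}).ncard : ℝ) := by
    have h3 : 1 - β = (Nat.card {y : Fin n → F // f y = eval y g} : ℝ) / q ^ n := by
      have : β = 𝔼 y, ind (¬ f y = eval y g) := rfl
      rw [this, h1]; push_cast; ring
    rw [h3, div_mul_cancel₀ _ (by positivity)]
    rfl
  rw [← h2]
  have h4 : 4 * γ ≤ 4 * (d : ℝ) * γ := by nlinarith
  gcongr
  linarith
end

section
/- Let (x, σ) be an excellent pair and let f : F_q^n → F_q be any function such that for every point y with 𝒞_{x,σ} ∩ 𝒞_y ≠ ∅, f(y) is a most frequent value among the values T(C)(y) over C ∈ 𝒞_{x,σ} ∩ 𝒞_y. Then there exists an n-variate polynomial g over F_q of total degree at most d such that f(z) = g(z) for at least a (1 − 4dγ) fraction of z ∈ F_q^n. -/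
/-!
The proof works with triples of directions. For `u v w : F^n` let `cubeThrough x u v w` be the affine
span of `x, x + u, x + v, x + w`; up to a negligible proportion of degenerate triples, a uniform
triple gives a uniform cube through `x` together with a uniform point `x + u` of it. Write `A` for
`𝒞_{x,σ}`, `N = q^n`, and `W` for the number of triples whose cube lies in `A`.

*Points of cubes.* Excellence is a statement about lines through `x`. Sampling a line by one of its
nonzero directions `u`, and using that `f (x + u)` is a mode of the values `T C (x + u)`, one gets
that `T C (x + u) ≠ f (x + u)` for at most a `γ` fraction of the pairs `(C, x + u)` with `C ∈ A`
(`disagreement_with_plurality`), hence for at most `γ W` triples.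

*Lines not through `x`.* For a pair `(u, v)` consider the points `x + u + s v` with `s` ranging over
`0` and a set `S` of `d + 1` nonzero nodes. All of them lie on `cubeThrough x u v w`, for every `w`,
and the cube depends only on `(u + s v, v, w)`. If `T` and `f` agree at these `d + 2` points for some
cube of `A`, then `f` is the restriction of a degree `d` univariate polynomial there, so `f (x + u)`
is the Lagrange extrapolation from `S`. By a union bound the bad pairs, those violating the
extrapolation identity, carry at most `(d + 2) γ W` triples of `A` (`bad_pairs_weight`). To convert
weight into cardinality one needs that almost every pair `(u, v)` extends to about `W / N²` triples
of `A`. That is a variance bound (`triple_variance`, `light_pairs`): the indicator of `A` is invariant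
under `v ↦ v + t w` and `u ↦ u + t v`, and each averaging step contracts the variance by a factor
`1 / q`. The lower bound `μ_x(A) ≥ ε / 5 ≥ 2·10⁶ d⁶ / q` makes the light pairs negligible. So at most
a `δ = 17 / (5000 d²) = 3.4 d γ` fraction of pairs is bad (`bad_pairs_le`, `numeric_bound`).

*Self-correction.* Since `(d + 1)(2 d + 5) δ < 1`, the Rubinfeld-Sudan argument (`self_correct`) gives
a function `g` satisfying every extrapolation identity exactly, with `f = g` outside a fraction
`δ / (1 - 2 (d + 1) δ) ≤ 4 d γ` of the space. Such a `g` has degree at most `d` on every line, and since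
`2 d < q` it is a polynomial of total degree at most `d` (`poly_of_lines`).
-/

open MvPolynomial

/-- `T(C₁)` and `T(C₂)` agree on the line `ℓ`. -/
def LineAgree (F : Type) [Field F] [Fintype F] (n : ℕ)
    (T : AffineSubspace F (Fin n → F) → (Fin n → F) → F)
    (C₁ C₂ ℓ : AffineSubspace F (Fin n → F)) : Prop :=
  ∀ z : Fin n → F, z ∈ ℓ → T C₁ z = T C₂ z

/-- An excellent pair `(x, σ)`: (i) `μ_x(𝒞_{x,σ}) ≥ ε/5`, and (ii) picking `C₁` uniform in
`𝒞_{x,σ}`, a uniform line `ℓ` with `x ∈ ℓ ⊆ C₁`, and `C₂` uniform in `{C ∈ 𝒞_{x,σ} : ℓ ⊆ C}`,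
the probability that `T(C₁)|_ℓ ≠ T(C₂)|_ℓ` is at most `γ`.  (The probability is written as the
sum over the uniformly weighted pairs `(C₁, ℓ)` of the conditional probability over `C₂`,
compared against `γ` times the number of pairs `(C₁, ℓ)`.) -/
def Excellent (F : Type) [Field F] [Fintype F] (n : ℕ)
    (T : AffineSubspace F (Fin n → F) → (Fin n → F) → F)
    (d : ℕ) (ε : ℝ) (x : Fin n → F) (σ : F) : Prop :=
  ε / 5 ≤ muX F n x (cubesVal F n T x σ) ∧
  (∑ᶠ C₁ ∈ cubesVal F n T x σ,
      ∑ᶠ ℓ ∈ {ℓ : AffineSubspace F (Fin n → F) | IsLine F n ℓ ∧ x ∈ ℓ ∧ ℓ ≤ C₁},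
        (({C₂ ∈ cubesVal F n T x σ | ℓ ≤ C₂ ∧ ¬ LineAgree F n T C₁ C₂ ℓ}.ncard : ℝ) /
          ({C₂ ∈ cubesVal F n T x σ | ℓ ≤ C₂}.ncard : ℝ)))
    ≤ gam d * (({p : AffineSubspace F (Fin n → F) × AffineSubspace F (Fin n → F) |
        p.1 ∈ cubesVal F n T x σ ∧ IsLine F n p.2 ∧ x ∈ p.2 ∧ p.2 ≤ p.1}).ncard : ℝ)

/-! ### Variance of the number of completions of a pair -/

/-- One averaging step for a mean-zero `G` that is invariant under `u ↦ u + t • w`: averaging over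
`w` shrinks the mean square by a factor `1 / q`. Invariance lets one replace `G u w` by its average
along the line `u + F w`; the translates `b (u - t • w)` of `b u = ∑ w, G u w` are uncorrelated for
distinct `t`, and the inequality is the nonnegativity of
`∑ (N * G u w - ∑ t, b (u - t • w)) ^ 2`. -/
theorem sum_fiber_sq_le {F V : Type*} [Field F] [Fintype F] [AddCommGroup V] [Module F V]
    [Fintype V] (G : V → V → ℝ) (hG : ∀ (t : F) (u w : V), G (u + t • w) w = G u w)
    (h0 : ∑ u, ∑ w, G u w = 0) :
    (Fintype.card F : ℝ) * ∑ u, (∑ w, G u w) ^ 2 ≤ Fintype.card V * ∑ u, ∑ w, G u w ^ 2 := by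
  classical
  set N : ℝ := ((Fintype.card V : ℕ) : ℝ) with hN
  have hNpos : 0 < N := by rw [hN]; exact_mod_cast Fintype.card_pos
  set b : V → ℝ := fun u => ∑ w, G u w with hb
  set B : ℝ := ∑ u, b u ^ 2 with hB
  -- by invariance of `G` along `w`, translating `b` by `t • w` does not change its pairing with `G`
  have hcross : ∀ t : F, ∑ w, ∑ u, G u w * b (u - t • w) = B := by
    intro t
    have h1 : ∀ w, ∑ u, G u w * b (u - t • w) = ∑ u, G u w * b u := by
      intro w
      rw [← Equiv.sum_comp (Equiv.addRight (t • w))]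
      simp [hG]
    simp_rw [h1]
    rw [Finset.sum_comm, hB]
    refine Finset.sum_congr rfl fun u _ => ?_
    rw [← Finset.sum_mul, sq]
  have hdiag : ∀ t : F, ∑ w, ∑ u, b (u - t • w) * b (u - t • w) = N * B := by
    intro t
    have h1 : ∀ w : V, ∑ u, b (u - t • w) * b (u - t • w) = B := by
      intro w
      rw [← Equiv.sum_comp (Equiv.addRight (t • w))]
      simp [hB, sq]
    simp [h1, hN]
  have hoff : ∀ t t' : F, t ≠ t' → ∑ w, ∑ u, b (u - t • w) * b (u - t' • w) = 0 := by
    intro t t' h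
    have h1 : ∀ w : V, ∑ u, b (u - t • w) * b (u - t' • w)
        = ∑ u, b u * b (u + (t - t') • w) := by
      intro w
      rw [← Equiv.sum_comp (Equiv.addRight (t • w))]
      refine Finset.sum_congr rfl fun u _ => ?_
      simp only [Equiv.coe_addRight, add_sub_cancel_right, sub_smul]
      rw [add_sub_assoc]
    simp_rw [h1]
    rw [Finset.sum_comm]
    refine Finset.sum_eq_zero fun u _ => ?_
    rw [← Finset.mul_sum]
    have h2 : ∑ w : V, b (u + (t - t') • w) = ∑ w, b w := by
      have hbij : Function.Bijective (fun w : V => u + (t - t') • w) :=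
        (Equiv.addLeft u).bijective.comp (MulAction.bijective₀ (sub_ne_zero.2 h))
      exact hbij.sum_comp b
    rw [h2, h0, mul_zero]
  have hdouble : ∑ w, ∑ u, (∑ t : F, b (u - t • w)) ^ 2 = Fintype.card F * (N * B) := by
    have h1 : ∀ w u : V, (∑ t : F, b (u - t • w)) ^ 2
        = ∑ t : F, ∑ t' : F, b (u - t • w) * b (u - t' • w) := by
      intro w u
      rw [sq, Finset.sum_mul_sum]
    simp_rw [h1]
    calc _ = ∑ t : F, ∑ t' : F, ∑ w, ∑ u, b (u - t • w) * b (u - t' • w) := by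
          have := Finset.sum_comm (s := (Finset.univ : Finset (V × V)))
            (t := (Finset.univ : Finset (F × F)))
            (f := fun a c => b (a.2 - c.1 • a.1) * b (a.2 - c.2 • a.1))
          simpa only [Fintype.sum_prod_type] using this
      _ = ∑ t : F, N * B := by
          refine Finset.sum_congr rfl fun t _ => ?_
          rw [Finset.sum_eq_single t, hdiag]
          · intro t' _ h; exact hoff _ _ h.symm
          · simp
      _ = _ := by simp
  have hsq : 0 ≤ ∑ w, ∑ u, (N * G u w - ∑ t : F, b (u - t • w)) ^ 2 := by positivity
  have hexp : ∑ w, ∑ u, (N * G u w - ∑ t : F, b (u - t • w)) ^ 2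
      = N ^ 2 * ∑ u, ∑ w, G u w ^ 2 - 2 * N * (Fintype.card F * B)
        + Fintype.card F * (N * B) := by
    rw [← hdouble]
    have h2 : (Fintype.card F : ℝ) * B = ∑ w, ∑ u, G u w * ∑ t : F, b (u - t • w) := by
      simp_rw [Finset.mul_sum]
      simp_rw [fun w : V => Finset.sum_comm (s := (Finset.univ : Finset V))
            (t := (Finset.univ : Finset F)) (f := fun u t => G u w * b (u - t • w))]
      rw [Finset.sum_comm]
      simp [hcross]
    rw [h2, Finset.sum_comm (f := fun u w => G u w ^ 2)]
    simp_rw [Finset.mul_sum, ← Finset.sum_sub_distrib, ← Finset.sum_add_distrib]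
    refine Finset.sum_congr rfl fun w _ => Finset.sum_congr rfl fun u _ => ?_
    simp_rw [← Finset.mul_sum]
    ring
  rw [hexp] at hsq
  have : 0 ≤ N * (N * ∑ u, ∑ w, G u w ^ 2 - Fintype.card F * B) := by linarith
  have := nonneg_of_mul_nonneg_right this hNpos
  linarith

/-- The variance form of `sum_fiber_sq_le`, without the assumption of mean zero. -/
theorem sum_fiber_sq_sub_le {F V : Type*} [Field F] [Fintype F] [AddCommGroup V] [Module F V]
    [Fintype V] (G : V → V → ℝ) (hG : ∀ (t : F) (u w : V), G (u + t • w) w = G u w) :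
    (Fintype.card F : ℝ) *
        (∑ u, (∑ w, G u w) ^ 2 - (∑ u, ∑ w, G u w) ^ 2 / Fintype.card V) ≤
      Fintype.card V * (∑ u, ∑ w, G u w ^ 2 - (∑ u, ∑ w, G u w) ^ 2 / Fintype.card V ^ 2) := by
  set N : ℝ := ((Fintype.card V : ℕ) : ℝ) with hN
  have hNpos : 0 < N := by rw [hN]; exact_mod_cast Fintype.card_pos
  set S := ∑ u, ∑ w, G u w with hS
  have h := sum_fiber_sq_le (F := F) (fun u w => G u w - S / N ^ 2)
    (fun t u w => by simp only [hG]) (by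
      simp only [Finset.sum_sub_distrib, ← hS, Finset.sum_const, Finset.card_univ, nsmul_eq_mul,
        ← hN]
      field_simp; ring)
  have e1 : ∑ u, (∑ w, (G u w - S / N ^ 2)) ^ 2 = ∑ u, (∑ w, G u w) ^ 2 - S ^ 2 / N := by
    simp only [Finset.sum_sub_distrib, Finset.sum_const, Finset.card_univ, nsmul_eq_mul, ← hN,
      sub_sq, Finset.sum_add_distrib, ← Finset.mul_sum, ← Finset.sum_mul, ← hS]
    field_simp; ring
  have e2 : ∑ u, ∑ w, (G u w - S / N ^ 2) ^ 2 = ∑ u, ∑ w, G u w ^ 2 - S ^ 2 / N ^ 2 := by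
    simp only [Finset.sum_sub_distrib, Finset.sum_const, Finset.card_univ, nsmul_eq_mul, ← hN,
      sub_sq, Finset.sum_add_distrib, ← Finset.mul_sum, ← Finset.sum_mul, ← hS]
    field_simp; ring
  rw [e1, e2] at h
  exact h

/-- Variance of the number of extensions of a random pair `(u, v)` to a triple in a set with
indicator `a`: apply `sum_fiber_sq_sub_le` to `a u` for each `u`, then to the marginal in
`(u, v)`. -/
theorem triple_variance {F V : Type*} [Field F] [Fintype F] [AddCommGroup V] [Module F V]
    [Fintype V] (a : V → V → V → ℝ) (ha : ∀ u v w, a u v w ^ 2 = a u v w)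
    (h1 : ∀ (t : F) (u v w : V), a u (v + t • w) w = a u v w)
    (h2 : ∀ (t : F) (u v w : V), a (u + t • v) v w = a u v w) :
    ((Fintype.card F : ℝ) - 1) *
        (∑ u, ∑ v, (∑ w, a u v w) ^ 2
          - (∑ u, ∑ v, ∑ w, a u v w) ^ 2 / Fintype.card V ^ 2) ≤
      Fintype.card V * ∑ u, ∑ v, ∑ w, a u v w := by
  set N : ℝ := ((Fintype.card V : ℕ) : ℝ) with hN
  have hNpos : 0 < N := by rw [hN]; exact_mod_cast Fintype.card_pos
  have k2 := sum_fiber_sq_sub_le (F := F) (fun u v => ∑ w, a u v w)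
    (fun t u v => by simp only [h2])
  have k1 : ∀ u, (Fintype.card F : ℝ) *
        (∑ v, (∑ w, a u v w) ^ 2 - (∑ v, ∑ w, a u v w) ^ 2 / N) ≤ N * ∑ v, ∑ w, a u v w := by
    intro u
    have h := sum_fiber_sq_sub_le (F := F) (a u) (fun t v w => h1 t u v w)
    simp only [ha] at h
    refine h.trans ?_
    have : 0 ≤ (∑ v, ∑ w, a u v w) ^ 2 / N ^ 2 := by positivity
    nlinarith
  have k3 := Finset.sum_le_sum fun u (_ : u ∈ Finset.univ) => k1 u
  rw [← Finset.mul_sum, ← Finset.mul_sum, Finset.sum_sub_distrib, ← Finset.sum_div] at k3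
  simp only [← hN] at k2
  set S := ∑ u, ∑ v, ∑ w, a u v w
  set Q := ∑ u, ∑ v, (∑ w, a u v w) ^ 2
  set R := ∑ u, (∑ v, ∑ w, a u v w) ^ 2
  have k4 : (Fintype.card F : ℝ) * (R / N - S ^ 2 / N ^ 2) ≤ Q - S ^ 2 / N ^ 2 := by
    have : (Fintype.card F : ℝ) * (R / N - S ^ 2 / N ^ 2)
        = (Fintype.card F : ℝ) * (R - S ^ 2 / N) / N := by field_simp
    rw [this, div_le_iff₀ hNpos]
    linarith
  nlinarith

/-- Chebyshev's inequality for `triple_variance`: few pairs `(u, v)` have at most `1 - τ` times the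
average number of extensions. -/
theorem light_pairs {F V : Type*} [Field F] [Fintype F] [AddCommGroup V] [Module F V]
    [Fintype V] (a : V → V → V → ℝ) (ha : ∀ u v w, a u v w ^ 2 = a u v w)
    (h1 : ∀ (t : F) (u v w : V), a u (v + t • w) w = a u v w)
    (h2 : ∀ (t : F) (u v w : V), a (u + t • v) v w = a u v w)
    (L : Finset (V × V)) (τ : ℝ) (hτ : 0 < τ)
    (hL : ∀ p ∈ L, ∑ w, a p.1 p.2 w ≤
      (1 - τ) * ((∑ u, ∑ v, ∑ w, a u v w) / Fintype.card V ^ 2)) :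
    ((Fintype.card F : ℝ) - 1) * τ ^ 2 * (∑ u, ∑ v, ∑ w, a u v w) ^ 2 * L.card ≤
      Fintype.card V ^ 5 * ∑ u, ∑ v, ∑ w, a u v w := by
  classical
  have hvar := triple_variance a ha h1 h2
  set N : ℝ := ((Fintype.card V : ℕ) : ℝ) with hN
  have hNpos : 0 < N := by rw [hN]; exact_mod_cast Fintype.card_pos
  set S := ∑ u, ∑ v, ∑ w, a u v w with hS
  have hS0 : 0 ≤ S := by
    refine Finset.sum_nonneg fun u _ => Finset.sum_nonneg fun v _ => Finset.sum_nonneg fun w _ => ?_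
    rw [← ha]; positivity
  have hq : (1 : ℝ) ≤ Fintype.card F := by exact_mod_cast Fintype.card_pos
  have e : ∑ p : V × V, (∑ w, a p.1 p.2 w - S / N ^ 2) ^ 2
      = ∑ u, ∑ v, (∑ w, a u v w) ^ 2 - S ^ 2 / N ^ 2 := by
    rw [Fintype.sum_prod_type]
    simp only [Finset.sum_sub_distrib, Finset.sum_const, Finset.card_univ, nsmul_eq_mul, ← hN,
      sub_sq, Finset.sum_add_distrib, ← Finset.mul_sum, ← Finset.sum_mul, ← hS]
    field_simp; ring
  have k : L.card * (τ * (S / N ^ 2)) ^ 2 ≤ ∑ p : V × V, (∑ w, a p.1 p.2 w - S / N ^ 2) ^ 2 := by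
    calc (L.card : ℝ) * (τ * (S / N ^ 2)) ^ 2 = ∑ p ∈ L, (τ * (S / N ^ 2)) ^ 2 := by simp
      _ ≤ ∑ p ∈ L, (∑ w, a p.1 p.2 w - S / N ^ 2) ^ 2 := by
        refine Finset.sum_le_sum fun p hp => ?_
        have := hL p hp
        have h0 : 0 ≤ τ * (S / N ^ 2) := by positivity
        nlinarith
      _ ≤ _ := Finset.sum_le_sum_of_subset_of_nonneg (Finset.subset_univ _)
        fun _ _ _ => sq_nonneg _
  rw [e] at k
  have k2 := mul_le_mul_of_nonneg_left k (sub_nonneg.2 hq)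
  have k3 := mul_le_mul_of_nonneg_left (k2.trans hvar) (by positivity : 0 ≤ N ^ 4)
  calc _ = N ^ 4 * (((Fintype.card F : ℝ) - 1) * (L.card * (τ * (S / N ^ 2)) ^ 2)) := by
        field_simp
    _ ≤ _ := k3
    _ = _ := by ring

/-! ### Extrapolation and self-correction -/

/-- The value at `0` extrapolated from the values of `φ` at the nodes in `S`. -/
noncomputable def extrap {F : Type*} [Field F] [DecidableEq F] (S : Finset F) (φ : F → F) : F :=
  ∑ s ∈ S, (Lagrange.basis S id s).eval 0 * φ s

theorem extrap_eq_of_poly {F : Type*} [Field F] [DecidableEq F] (S : Finset F) (φ : F → F)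
    (p : Polynomial F) (hp : p.degree < S.card) (h : ∀ s ∈ S, φ s = p.eval s) :
    extrap S φ = p.eval 0 := by
  have h1 := Lagrange.eq_interpolate_of_eval_eq φ (v := id) Function.injective_id.injOn hp
    (fun i hi => (h i hi).symm)
  conv_rhs => rw [h1, Lagrange.interpolate_apply, Polynomial.eval_finsetSum]
  simp [extrap, mul_comm]

theorem extrap_congr {F : Type*} [Field F] [DecidableEq F] (S : Finset F) (φ ψ : F → F)
    (h : ∀ s ∈ S, φ s = ψ s) : extrap S φ = extrap S ψ :=
  Finset.sum_congr rfl fun s hs => by rw [h s hs]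

theorem extrap_comm {F : Type*} [Field F] [DecidableEq F] (S S' : Finset F) (φ : F → F → F) :
    extrap S (fun s => extrap S' (fun t => φ s t)) =
      extrap S' (fun t => extrap S (fun s => φ s t)) := by
  simp only [extrap, Finset.mul_sum]
  rw [Finset.sum_comm]
  refine Finset.sum_congr rfl fun _ _ => Finset.sum_congr rfl fun _ _ => by ring

/-- If `v` is a most frequent value of `φ` on `s`, then two random elements of `s` have different
`φ`-values at least as often as one random element has a value other than `v`. -/
theorem card_mul_ne_mode_le {α β : Type*} [DecidableEq β] (s : Finset α) (φ : α → β) (v : β)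
    (hv : ∀ w, (s.filter fun a => φ a = w).card ≤ (s.filter fun a => φ a = v).card) :
    s.card * (s.filter fun a => φ a ≠ v).card ≤
      ∑ a ∈ s, (s.filter fun b => φ b ≠ φ a).card := by
  rw [← smul_eq_mul]
  refine Finset.card_nsmul_le_sum _ _ _ fun a _ => ?_
  have h1 := Finset.card_filter_add_card_filter_not (s := s) (fun a => φ a = v)
  have h2 := Finset.card_filter_add_card_filter_not (s := s) (fun b => φ b = φ a)
  have h3 := hv (φ a)
  simp only [ne_eq]
  omega

theorem exists_mode {α β : Type*} [Fintype α] [Nonempty α] [DecidableEq β] (φ : α → β) :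
    ∃ v, ∀ w, (Finset.univ.filter fun a => φ a = w).card ≤
      (Finset.univ.filter fun a => φ a = v).card := by
  classical
  obtain ⟨v, -, hv⟩ := (Finset.univ.image φ).exists_max_image
    (fun v => (Finset.univ.filter fun a => φ a = v).card) (by simp)
  refine ⟨v, fun w => ?_⟩
  by_cases hw : w ∈ Finset.univ.image φ
  · exact hv w hw
  · rw [Finset.filter_false_of_mem]
    · simp
    · rintro a - rfl; exact hw (by simp)

theorem card_filter_le_of_injective {α β : Type*} [Fintype α] [Fintype β] (P : β → Prop)
    [DecidablePred P] (e : α → β) (he : Function.Injective e) :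
    (Finset.univ.filter fun a => P (e a)).card ≤ (Finset.univ.filter P).card :=
  Finset.card_le_card_of_injOn e (by intro a; simp) he.injOn

open Finset in
/-- Rubinfeld-Sudan self-correction. If `f` satisfies almost all degree-`d` extrapolation
identities, then the function `g`, taking at `y` the most frequent extrapolation of `f` to `y` along
lines through `y`, satisfies all of them and is close to `f`. -/
theorem self_correct {F V : Type*} [Field F] [Fintype F] [DecidableEq F] [AddCommGroup V]
    [Module F V] [Fintype V] (f : V → F) (d : ℕ) (δ : ℝ)
    (hδ : (d + 1) * (2 * d + 5) * δ < 1) (S₀ : Finset F) (hS₀ : 0 ∉ S₀) (hS₀d : S₀.card = d + 1)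
    (h : ∀ S : Finset F, 0 ∉ S → S.card = d + 1 →
      ((univ.filter fun p : V × V => f p.1 ≠ extrap S fun s => f (p.1 + s • p.2)).card : ℝ) ≤
        δ * Fintype.card V ^ 2) :
    ∃ g : V → F,
      (∀ S : Finset F, 0 ∉ S → S.card = d + 1 →
        ∀ y h : V, g y = extrap S fun s => g (y + s • h)) ∧
      (1 - 2 * (d + 1) * δ) * (univ.filter fun y => f y ≠ g y).card ≤ δ * Fintype.card V := by
  classical
  set N : ℝ := ((Fintype.card V : ℕ) : ℝ) with hN
  have hNpos : 0 < N := by rw [hN]; exact_mod_cast Fintype.card_pos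
  let e : V → V → F := fun y k => extrap S₀ fun s => f (y + s • k)
  -- two random extrapolations of the value at a fixed point agree
  have hcoll : ∀ y : V, ((univ.filter fun p : V × V => e y p.1 ≠ e y p.2).card : ℝ) ≤
      2 * (d + 1) * δ * N ^ 2 := by
    intro y
    have hsub : (univ.filter fun p : V × V => e y p.1 ≠ e y p.2) ⊆
        (S₀.biUnion fun s => univ.filter fun p : V × V =>
          f (y + s • p.1) ≠ e (y + s • p.1) p.2) ∪
        (S₀.biUnion fun s => univ.filter fun p : V × V =>
          f (y + s • p.2) ≠ e (y + s • p.2) p.1) := by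
      intro p hp
      by_contra hcon
      simp only [mem_union, mem_biUnion, mem_filter, mem_univ, true_and, not_or, not_exists,
        not_and, not_not] at hcon hp
      apply hp
      calc e y p.1 = extrap S₀ fun s => extrap S₀ fun t => f (y + s • p.1 + t • p.2) :=
            extrap_congr _ _ _ fun s hs => hcon.1 s hs
        _ = extrap S₀ fun t => extrap S₀ fun s => f (y + t • p.2 + s • p.1) := by
            rw [extrap_comm]; simp only [add_right_comm]
        _ = e y p.2 := (extrap_congr _ _ _ fun s hs => hcon.2 s hs).symm
    have hb1 : ∀ s ∈ S₀, ((univ.filter fun p : V × V =>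
          f (y + s • p.1) ≠ e (y + s • p.1) p.2).card : ℝ) ≤ δ * N ^ 2 := by
      intro s hs
      refine le_trans ?_ (h S₀ hS₀ hS₀d)
      have hs0 : s ≠ 0 := fun h0 => hS₀ (h0 ▸ hs)
      exact_mod_cast card_filter_le_of_injective
        (fun p : V × V => f p.1 ≠ e p.1 p.2) (fun p : V × V => (y + s • p.1, p.2)) (by
          rintro ⟨p, p'⟩ ⟨r, r'⟩ hpr
          simpa [hs0] using hpr)
    have hb2 : ∀ s ∈ S₀, ((univ.filter fun p : V × V =>
          f (y + s • p.2) ≠ e (y + s • p.2) p.1).card : ℝ) ≤ δ * N ^ 2 := by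
      intro s hs
      refine le_trans ?_ (h S₀ hS₀ hS₀d)
      have hs0 : s ≠ 0 := fun h0 => hS₀ (h0 ▸ hs)
      exact_mod_cast card_filter_le_of_injective
        (fun p : V × V => f p.1 ≠ e p.1 p.2) (fun p : V × V => (y + s • p.2, p.1)) (by
          rintro ⟨p, p'⟩ ⟨r, r'⟩ hpr
          simpa [hs0, and_comm] using hpr)
    calc _ ≤ ((∑ s ∈ S₀, (univ.filter fun p : V × V =>
          f (y + s • p.1) ≠ e (y + s • p.1) p.2).card + ∑ s ∈ S₀, (univ.filter fun p : V × V =>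
          f (y + s • p.2) ≠ e (y + s • p.2) p.1).card : ℕ) : ℝ) := by
          exact_mod_cast (card_le_card hsub).trans ((card_union_le _ _).trans
            (add_le_add card_biUnion_le card_biUnion_le))
      _ ≤ ∑ s ∈ S₀, δ * N ^ 2 + ∑ s ∈ S₀, δ * N ^ 2 := by
          push_cast
          exact add_le_add (sum_le_sum hb1) (sum_le_sum hb2)
      _ = _ := by simp [hS₀d]; ring
  choose g hg using fun y => exists_mode (e y)
  have hmode : ∀ y : V, ((univ.filter fun k => e y k ≠ g y).card : ℝ) ≤
      2 * (d + 1) * δ * N := by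
    intro y
    have h1 := card_mul_ne_mode_le univ (e y) (g y) (hg y)
    have h2 : ∑ a : V, (univ.filter fun b => e y b ≠ e y a).card =
        (univ.filter fun p : V × V => e y p.1 ≠ e y p.2).card := by
      simp only [card_filter]
      rw [Fintype.sum_prod_type, sum_comm]
    rw [h2, card_univ] at h1
    have h3 : N * ((univ.filter fun k => e y k ≠ g y).card : ℝ) ≤ 2 * (d + 1) * δ * N ^ 2 :=
      le_trans (by rw [hN]; exact_mod_cast h1) (hcoll y)
    have : N * ((univ.filter fun k => e y k ≠ g y).card : ℝ) ≤ N * (2 * (d + 1) * δ * N) := by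
      linarith
    exact le_of_mul_le_mul_left this hNpos
  refine ⟨g, ?_, ?_⟩
  · intro S hS hSd y k
    -- For a random pair `p`, extrapolate along the grid `y + s • k + t • (p.1 + s • p.2)`. Outside
    -- `B₁` the `t`-lines compute `g` at `y + s • k`; outside `B₂` the `s`-lines with `t ∈ S₀` satisfy
    -- the identity for `f`. Some `p` avoids both, and the two extrapolations commute.
    let B₁ : Finset (V × V) := (insert 0 S).biUnion fun s => univ.filter fun p : V × V =>
      e (y + s • k) (p.1 + s • p.2) ≠ g (y + s • k)
    let B₂ : Finset (V × V) := S₀.biUnion fun t => univ.filter fun p : V × V =>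
      f (y + t • p.1) ≠ extrap S fun s => f (y + t • p.1 + s • (k + t • p.2))
    have hB₁ : (B₁.card : ℝ) ≤ (d + 2) * (2 * (d + 1) * δ * N ^ 2) := by
      have hb : ∀ s ∈ insert 0 S, ((univ.filter fun p : V × V =>
          e (y + s • k) (p.1 + s • p.2) ≠ g (y + s • k)).card : ℝ) ≤ 2 * (d + 1) * δ * N ^ 2 := by
        intro s _
        have h1 : (univ.filter fun p : V × V =>
            e (y + s • k) (p.1 + s • p.2) ≠ g (y + s • k)).card ≤
            ((univ.filter fun l => e (y + s • k) l ≠ g (y + s • k)) ×ˢ (univ : Finset V)).card :=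
          card_le_card_of_injOn (fun p => (p.1 + s • p.2, p.2)) (by intro p; simp) (by
            rintro ⟨p, p'⟩ - ⟨r, r'⟩ - hpr
            simp only [Prod.mk.injEq] at hpr ⊢
            obtain ⟨h1, rfl⟩ := hpr
            simpa using h1)
        rw [card_product, card_univ] at h1
        calc _ ≤ ((univ.filter fun l => e (y + s • k) l ≠ g (y + s • k)).card : ℝ) * N := by
              rw [hN]; exact_mod_cast h1
          _ ≤ 2 * (d + 1) * δ * N * N := by gcongr; exact hmode _
          _ = _ := by ring
      calc (B₁.card : ℝ) ≤ ∑ s ∈ insert 0 S, ((univ.filter fun p : V × V =>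
          e (y + s • k) (p.1 + s • p.2) ≠ g (y + s • k)).card : ℝ) := by
            exact_mod_cast card_biUnion_le
        _ ≤ ∑ s ∈ insert 0 S, 2 * (d + 1) * δ * N ^ 2 := sum_le_sum hb
        _ = _ := by rw [sum_const, card_insert_of_notMem hS, hSd, nsmul_eq_mul]; push_cast; ring
    have hB₂ : (B₂.card : ℝ) ≤ (d + 1) * (δ * N ^ 2) := by
      have hb : ∀ t ∈ S₀, ((univ.filter fun p : V × V =>
          f (y + t • p.1) ≠ extrap S fun s => f (y + t • p.1 + s • (k + t • p.2))).card : ℝ) ≤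
          δ * N ^ 2 := by
        intro t ht
        refine le_trans ?_ (h S hS hSd)
        have ht0 : t ≠ 0 := fun h0 => hS₀ (h0 ▸ ht)
        exact_mod_cast card_filter_le_of_injective
          (fun p : V × V => f p.1 ≠ extrap S fun s => f (p.1 + s • p.2))
          (fun p : V × V => (y + t • p.1, k + t • p.2)) (by
            rintro ⟨p, p'⟩ ⟨r, r'⟩ hpr
            simpa [ht0] using hpr)
      calc (B₂.card : ℝ) ≤ ∑ t ∈ S₀, ((univ.filter fun p : V × V =>
          f (y + t • p.1) ≠ extrap S fun s => f (y + t • p.1 + s • (k + t • p.2))).card : ℝ) := by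
            exact_mod_cast card_biUnion_le
        _ ≤ ∑ t ∈ S₀, δ * N ^ 2 := sum_le_sum hb
        _ = _ := by rw [sum_const, hS₀d]; simp
    have hlt : ((B₁ ∪ B₂).card : ℝ) < (univ : Finset (V × V)).card := by
      calc ((B₁ ∪ B₂).card : ℝ) ≤ B₁.card + B₂.card := by exact_mod_cast card_union_le _ _
        _ ≤ (d + 2) * (2 * (d + 1) * δ * N ^ 2) + (d + 1) * (δ * N ^ 2) := add_le_add hB₁ hB₂
        _ = ((d + 1) * (2 * d + 5) * δ) * N ^ 2 := by ring
        _ < 1 * N ^ 2 := by gcongr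
        _ = _ := by simp [hN, sq]
    obtain ⟨p, -, hp⟩ := exists_mem_notMem_of_card_lt_card (by exact_mod_cast hlt :
      (B₁ ∪ B₂).card < (univ : Finset (V × V)).card)
    simp only [B₁, B₂, mem_union, mem_biUnion, mem_filter, mem_univ, true_and, not_or, not_exists,
        not_and, not_not] at hp
    obtain ⟨hp1, hp2⟩ := hp
    have h0 := hp1 0 (mem_insert_self _ _)
    simp only [zero_smul, add_zero] at h0
    rw [← h0]
    calc e y p.1 = extrap S₀ fun t => extrap S fun s => f (y + t • p.1 + s • (k + t • p.2)) :=
          extrap_congr _ _ _ hp2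
      _ = extrap S fun s => e (y + s • k) (p.1 + s • p.2) := by
          rw [extrap_comm]
          simp only [e]
          refine extrap_congr _ _ _ fun s _ => extrap_congr _ _ _ fun t _ => ?_
          congr 1
          simp only [smul_add, smul_comm t s]
          abel
      _ = _ := extrap_congr _ _ _ fun s hs => hp1 s (mem_insert_of_mem hs)
  · have hle : (1 - 2 * (d + 1) * δ) * N * (univ.filter fun y => f y ≠ g y).card ≤ δ * N ^ 2 := by
      refine le_trans ?_ (h S₀ hS₀ hS₀d)
      have : ((univ.filter fun p : V × V => f p.1 ≠ extrap S₀ fun s => f (p.1 + s • p.2)).card : ℝ)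
          = ∑ y, ((univ.filter fun k => f y ≠ e y k).card : ℝ) := by
        norm_cast
        simp only [card_filter]
        rw [Fintype.sum_prod_type]
      rw [this, mul_comm, ← nsmul_eq_mul]
      refine le_trans (card_nsmul_le_sum _ _ _ fun y hy => ?_)
        (sum_le_sum_of_subset_of_nonneg (subset_univ _) fun _ _ _ => by positivity)
      have hy' : f y ≠ g y := by simpa using hy
      have h1 := card_filter_add_card_filter_not (s := (univ : Finset V)) (fun k => e y k = g y)
      have h2 : (univ.filter fun k => e y k = g y).card ≤ (univ.filter fun k => f y ≠ e y k).card :=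
        card_le_card fun k hk => by
          simp only [mem_filter, mem_univ, true_and] at hk ⊢
          rwa [hk]
      have h3 := hmode y
      simp only [ne_eq] at h3
      have h1' : ((univ.filter fun k => e y k = g y).card : ℝ) +
          (univ.filter fun k => ¬ e y k = g y).card = N := by
        rw [hN]; exact_mod_cast h1
      have h2' : ((univ.filter fun k => e y k = g y).card : ℝ) ≤
        (univ.filter fun k => f y ≠ e y k).card := by exact_mod_cast h2
      linarith
    have : N * ((1 - 2 * (d + 1) * δ) * (univ.filter fun y => f y ≠ g y).card) ≤ N * (δ * N) := by
      linarith
    exact le_of_mul_le_mul_left this hNpos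

/-! ### Functions of low degree on all lines -/

open MvPolynomial in
theorem eval_line {F : Type*} [Field F] {n d : ℕ} (P : MvPolynomial (Fin n) F)
    (hP : P.totalDegree ≤ d) (y k : Fin n → F) :
    ∃ p : Polynomial F, p.natDegree ≤ d ∧ ∀ t : F, eval (y + t • k) P = p.eval t := by
  refine ⟨aeval (fun i => Polynomial.C (y i) + Polynomial.C (k i) * Polynomial.X) P, ?_, ?_⟩
  · have := MvPolynomial.aeval_natDegree_le (n := 1) P hP
      (fun i => Polynomial.C (y i) + Polynomial.C (k i) * Polynomial.X) (fun i => by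
        compute_degree)
    simpa using this
  · intro t
    rw [aeval_def, polynomial_eval_eval₂, eval, coe_eval₂Hom]
    congr 1
    · ext a; simp
    · funext i
      simp only [Polynomial.eval_add, Polynomial.eval_mul, Polynomial.eval_C, Polynomial.eval_X,
        Pi.add_apply, Pi.smul_apply, smul_eq_mul, mul_comm t]

open MvPolynomial in
theorem eval_smul_of_isHomogeneous {F : Type*} [Field F] {n m : ℕ} {P : MvPolynomial (Fin n) F}
    (hP : P.IsHomogeneous m) (t : F) (z : Fin n → F) :
    eval (t • z) P = t ^ m * eval z P := by
  rw [eval_eq', eval_eq', Finset.mul_sum]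
  refine Finset.sum_congr rfl fun k hk => ?_
  have h1 : ∑ i, k i = m := by
    have := hP (mem_support_iff.1 hk)
    rw [Finsupp.weight_apply, Finsupp.sum_fintype _ _ (by simp)] at this
    simpa using this
  simp only [Pi.smul_apply, smul_eq_mul, mul_pow, Finset.prod_mul_distrib, Finset.prod_pow_eq_pow_sum,
    h1]
  ring

open MvPolynomial in
/-- A function that has degree at most `d` on every line is a polynomial of total degree at most `d`,
provided `2 d < q`. By induction the slices `z 0 = s` are polynomials; interpolating `d + 1` of them
gives total degree at most `2 d`, and the lines through the origin force the homogeneous components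
of degree above `d` to vanish at every point. -/
theorem poly_of_lines {F : Type*} [Field F] [Fintype F] [DecidableEq F] (d : ℕ)
    (hq : 2 * d < Fintype.card F) : ∀ (n : ℕ) (g : (Fin n → F) → F),
    (∀ y k : Fin n → F, ∃ p : Polynomial F, p.natDegree ≤ d ∧ ∀ t : F, g (y + t • k) = p.eval t) →
    ∃ P : MvPolynomial (Fin n) F, P.totalDegree ≤ d ∧ ∀ z, g z = eval z P := by
  intro n
  induction n with
  | zero =>
    intro g _
    refine ⟨C (g 0), by simp, fun z => ?_⟩
    rw [eval_C, Subsingleton.elim z 0]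
  | succ n ih =>
    intro g hg
    have hslice : ∀ s : F, ∃ P : MvPolynomial (Fin n) F, P.totalDegree ≤ d ∧
        ∀ z, g (Fin.cons s z) = eval z P := by
      intro s
      refine ih (fun z => g (Fin.cons s z)) fun y k => ?_
      obtain ⟨p, hp, hpe⟩ := hg (Fin.cons s y) (Fin.cons 0 k)
      refine ⟨p, hp, fun t => ?_⟩
      rw [← hpe t]
      congr 1
      ext i
      refine Fin.cases ?_ (fun i => ?_) i <;> simp
    choose R hR hRe using hslice
    obtain ⟨S, -, hS⟩ := Finset.exists_subset_card_eq (s := (Finset.univ : Finset F)) (n := d + 1)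
      (by rw [Finset.card_univ]; omega)
    -- interpolate the slices
    set Q : MvPolynomial (Fin (n + 1)) F := ∑ s ∈ S,
      Polynomial.aeval (X 0 : MvPolynomial (Fin (n + 1)) F) (Lagrange.basis S id s) *
        rename Fin.succ (R s) with hQ
    have hQdeg : Q.totalDegree ≤ 2 * d := by
      refine totalDegree_finsetSum_le fun s hs => (totalDegree_mul _ _).trans ?_
      have h1 : (Lagrange.basis S id s).natDegree ≤ d := by
        have := Lagrange.degree_basis (s := S) (v := id) Function.injective_id.injOn hs
        rw [hS] at this
        exact Polynomial.natDegree_le_of_degree_le this.le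
      have h2 : (Polynomial.aeval (X 0 : MvPolynomial (Fin (n + 1)) F)
          (Lagrange.basis S id s)).totalDegree ≤ d := by
        rw [Polynomial.aeval_eq_sum_range]
        refine totalDegree_finsetSum_le fun i hi => (totalDegree_smul_le _ _).trans ?_
        rw [totalDegree_X_pow]
        have := Finset.mem_range.1 hi
        omega
      have h3 := (totalDegree_rename_le Fin.succ (R s)).trans (hR s)
      omega
    have hQe : ∀ z, g z = eval z Q := by
      intro z
      obtain ⟨p, hp, hpe⟩ := hg (Fin.cons 0 (Fin.tail z)) (Fin.cons 1 0)
      have hline : ∀ t : F, (Fin.cons 0 (Fin.tail z) + t • Fin.cons 1 0 : Fin (n + 1) → F)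
          = Fin.cons t (Fin.tail z) := by
        intro t
        ext i
        refine Fin.cases ?_ (fun i => ?_) i <;> simp
      simp only [hline] at hpe
      have hpS := Lagrange.eq_interpolate_of_eval_eq (s := S) (v := id) (f := p)
        (fun s => eval (Fin.tail z) (R s))
        Function.injective_id.injOn (by
          rw [hS]
          exact lt_of_le_of_lt (Polynomial.degree_le_of_natDegree_le hp)
            (by exact_mod_cast Nat.lt_succ_self d)) (fun i _ => by
          rw [← hRe, id, hpe])
      have hz := hpe (z 0)
      rw [Fin.cons_self_tail] at hz
      rw [hz, hpS, Lagrange.interpolate_apply, hQ, Polynomial.eval_finsetSum, map_sum]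
      refine Finset.sum_congr rfl fun s _ => ?_
      rw [Polynomial.eval_mul, Polynomial.eval_C, map_mul, eval_rename, mul_comm]
      congr 1
      rw [Polynomial.aeval_def, Polynomial.hom_eval₂, eval_X]
      have : (eval z).comp (algebraMap F (MvPolynomial (Fin (n + 1)) F)) = RingHom.id F := by
        ext a; simp [algebraMap_eq]
      rw [this, Polynomial.eval₂_id]
    -- homogeneous parts of degree above `d` vanish
    have hcomp : ∀ z : Fin (n + 1) → F, ∀ t : F, eval (t • z) Q =
        (∑ i ∈ Finset.range (2 * d + 1),
          Polynomial.C (eval z (homogeneousComponent i Q)) * Polynomial.X ^ i).eval t := by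
      intro z t
      have hsum : Q = ∑ i ∈ Finset.range (2 * d + 1), homogeneousComponent i Q := by
        conv_lhs => rw [← sum_homogeneousComponent Q]
        refine Finset.sum_subset (Finset.range_subset_range.2 (by omega)) fun i _ hi => ?_
        exact homogeneousComponent_eq_zero _ _ (by simpa using hi)
      conv_lhs => rw [hsum, map_sum]
      rw [Polynomial.eval_finsetSum]
      refine Finset.sum_congr rfl fun i _ => ?_
      rw [eval_smul_of_isHomogeneous (homogeneousComponent_isHomogeneous i Q)]
      rw [Polynomial.eval_mul, Polynomial.eval_C, Polynomial.eval_pow, Polynomial.eval_X, mul_comm]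
    refine ⟨∑ i ∈ Finset.range (d + 1), homogeneousComponent i Q, ?_, ?_⟩
    · refine totalDegree_finsetSum_le fun i hi =>
        (homogeneousComponent_isHomogeneous i Q).totalDegree_le.trans ?_
      have := Finset.mem_range.1 hi
      omega
    · intro z
      obtain ⟨p, hp, hpe⟩ := hg 0 z
      set r : Polynomial F := ∑ i ∈ Finset.range (2 * d + 1),
          Polynomial.C (eval z (homogeneousComponent i Q)) * Polynomial.X ^ i with hr
      have hpr : p = r := by
        refine Polynomial.eq_of_degrees_lt_of_eval_finset_eq Finset.univ ?_ ?_ ?_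
        · rw [Finset.card_univ]
          exact lt_of_le_of_lt (Polynomial.degree_le_of_natDegree_le hp)
            (by exact_mod_cast (by omega : d < Fintype.card F))
        · rw [Finset.card_univ]
          refine lt_of_le_of_lt (Polynomial.degree_le_of_natDegree_le (n := 2 * d)
            (Polynomial.natDegree_sum_le_of_forall_le _ _ fun i hi => ?_))
            (by exact_mod_cast hq)
          refine (Polynomial.natDegree_C_mul_X_pow_le _ _).trans ?_
          have := Finset.mem_range.1 hi
          omega
        · intro t _
          rw [← hpe, hr, ← hcomp, ← hQe, zero_add]
      have hcoef : ∀ i ∈ Finset.range (2 * d + 1), d < i →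
          eval z (homogeneousComponent i Q) = 0 := by
        intro i hi hdi
        have h1 : r.coeff i = 0 := by
          rw [← hpr]; exact Polynomial.coeff_eq_zero_of_natDegree_lt (by omega)
        rw [hr, Polynomial.finsetSum_coeff] at h1
        simpa [Polynomial.coeff_C_mul, Polynomial.coeff_X_pow, Finset.mem_range.1 hi] using h1
      have h1 := hcomp z 1
      rw [one_smul, ← hQe, Polynomial.eval_finsetSum] at h1
      rw [h1, map_sum]
      symm
      simp only [Polynomial.eval_mul, Polynomial.eval_C, Polynomial.eval_pow, Polynomial.eval_X,
        one_pow, mul_one]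
      refine Finset.sum_subset (Finset.range_subset_range.2 (by omega)) fun i hi hid => ?_
      exact hcoef i hi (by simpa using hid)

open MvPolynomial Finset in
/-- Self-correction combined with `poly_of_lines`. -/
theorem close_to_poly_of_extrap {F : Type*} [Field F] [Fintype F] [DecidableEq F] {n d : ℕ}
    (hq : 2 * d < Fintype.card F) (hq' : d + 2 ≤ Fintype.card F)
    (f : (Fin n → F) → F) (δ : ℝ) (hδ : (d + 1) * (2 * d + 5) * δ < 1)
    (h : ∀ S : Finset F, 0 ∉ S → S.card = d + 1 →
      ((univ.filter fun p : (Fin n → F) × (Fin n → F) =>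
        f p.1 ≠ extrap S fun s => f (p.1 + s • p.2)).card : ℝ) ≤
        δ * Fintype.card (Fin n → F) ^ 2) :
    ∃ P : MvPolynomial (Fin n) F, P.totalDegree ≤ d ∧
      (1 - 2 * (d + 1) * δ) * (univ.filter fun y => f y ≠ eval y P).card ≤
        δ * Fintype.card (Fin n → F) := by
  obtain ⟨S₀, hS₀, hS₀d⟩ := exists_subset_card_eq (s := (univ : Finset F).erase 0) (n := d + 1)
    (by rw [card_erase_of_mem (mem_univ _), card_univ]; omega)
  obtain ⟨g, hg, hfg⟩ := self_correct f d δ hδ S₀ (fun h0 => by simpa using hS₀ h0) hS₀d h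
  obtain ⟨P, hP, hPe⟩ := poly_of_lines d hq n g fun y k => by
    set p := Lagrange.interpolate S₀ id fun s => g (y + s • k) with hp
    have hpd : p.degree < (d + 1 : ℕ) := by
      rw [← hS₀d]; exact Lagrange.degree_interpolate_lt _ Function.injective_id.injOn
    have hpn : p.natDegree ≤ d := Polynomial.natDegree_le_of_degree_le (Order.le_of_lt_succ hpd)
    refine ⟨p, hpn, fun t => ?_⟩
    have hnode : ∀ s ∈ S₀, g (y + s • k) = p.eval s := fun s hs =>
      (Lagrange.eval_interpolate_at_node (v := id) (fun s => g (y + s • k))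
        Function.injective_id.injOn hs).symm
    by_cases ht : t ∈ S₀
    · exact hnode t ht
    · -- move `t` to the origin
      have hmem : ∀ s, s ∈ S₀.map (Equiv.subRight t).toEmbedding ↔ s + t ∈ S₀ := by
        intro s
        simp only [mem_map_equiv]
        rfl
      rw [hg (S₀.map (Equiv.subRight t).toEmbedding) (by rw [hmem]; simpa using ht)
        (by rw [card_map, hS₀d]) (y + t • k) k,
        extrap_eq_of_poly _ _ (p.comp (Polynomial.X + Polynomial.C t))]
      · simp
      · rw [card_map, hS₀d]
        refine lt_of_le_of_lt (Polynomial.degree_le_of_natDegree_le (n := d) ?_)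
          (by exact_mod_cast Nat.lt_succ_self d)
        rwa [Polynomial.natDegree_comp, Polynomial.natDegree_X_add_C, mul_one]
      · intro s hs
        rw [hmem] at hs
        rw [Polynomial.eval_comp, Polynomial.eval_add, Polynomial.eval_X, Polynomial.eval_C,
          ← hnode _ hs, add_smul, add_assoc, add_comm (s • k)]
  refine ⟨P, hP, ?_⟩
  simpa only [hPe] using hfg

/-! ### Cubes spanned by triples of directions -/

/-- The affine subspace through `x` with directions spanned by `u`, `v`, `w`; it is a cube exactly
when these are linearly independent. -/
def cubeThrough {F V : Type*} [Field F] [AddCommGroup V] [Module F V] (x u v w : V) :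
    AffineSubspace F V :=
  AffineSubspace.mk' x (Submodule.span F {u} ⊔ Submodule.span F {v} ⊔ Submodule.span F {w})

theorem span_add_smul_sup {F V : Type*} [Field F] [AddCommGroup V] [Module F V] (t : F)
    (v w : V) : Submodule.span F {v + t • w} ⊔ Submodule.span F {w} =
      Submodule.span F {v} ⊔ Submodule.span F {w} := by
  have hv : ∀ v', v' ∈ Submodule.span F {v'} ⊔ Submodule.span F {w} := fun v' =>
    Submodule.mem_sup_left (Submodule.mem_span_singleton_self _)
  have hw : ∀ v', w ∈ Submodule.span F {v'} ⊔ Submodule.span F {w} := fun v' =>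
    Submodule.mem_sup_right (Submodule.mem_span_singleton_self _)
  refine le_antisymm (sup_le ?_ le_sup_right) (sup_le ?_ le_sup_right)
  · rw [Submodule.span_singleton_le_iff_mem]
    exact add_mem (hv _) (Submodule.smul_mem _ _ (hw _))
  · rw [Submodule.span_singleton_le_iff_mem]
    have := sub_mem (hv (v + t • w)) (Submodule.smul_mem _ t (hw (v + t • w)))
    simpa using this

theorem cubeThrough_add_smul_mid {F V : Type*} [Field F] [AddCommGroup V] [Module F V] (t : F)
    (x u v w : V) : cubeThrough (F := F) x u (v + t • w) w = cubeThrough x u v w := by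
  rw [cubeThrough, sup_assoc, span_add_smul_sup, ← sup_assoc, cubeThrough]

theorem cubeThrough_add_smul_left {F V : Type*} [Field F] [AddCommGroup V] [Module F V] (t : F)
    (x u v w : V) : cubeThrough (F := F) x (u + t • v) v w = cubeThrough x u v w := by
  rw [cubeThrough, span_add_smul_sup, cubeThrough]

theorem mem_cubeThrough {F V : Type*} [Field F] [AddCommGroup V] [Module F V] (x u v w : V)
    (s : F) : x + u + s • v ∈ cubeThrough (F := F) x u v w := by
  rw [cubeThrough, AffineSubspace.mem_mk', vsub_eq_sub, add_assoc, add_sub_cancel_left]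
  exact Submodule.mem_sup_left (Submodule.add_mem_sup (Submodule.mem_span_singleton_self _)
    (Submodule.smul_mem _ _ (Submodule.mem_span_singleton_self _)))

open Module Finset in
theorem card_filter_mem_eq {F V : Type*} [Field F] [Fintype F] [AddCommGroup V] [Module F V]
    [Fintype V] [DecidableEq V] (U : Submodule F V) [DecidablePred (· ∈ U)] :
    (univ.filter fun w => w ∈ U).card = Fintype.card F ^ finrank F U := by
  rw [← Module.card_eq_pow_finrank (K := F) (V := U), Fintype.card_subtype]

open Module Finset in
theorem card_sup_span_eq {F V : Type*} [Field F] [Fintype F] [AddCommGroup V] [Module F V]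
    [Fintype V] [DecidableEq (Submodule F V)] (U W : Submodule F V)
    (hU : finrank F W = finrank F U + 1) (hUW : U ≤ W) :
    (univ.filter fun w => U ⊔ Submodule.span F {w} = W).card =
      Fintype.card F ^ finrank F W - Fintype.card F ^ finrank F U := by
  classical
  have hset : (univ.filter fun w => U ⊔ Submodule.span F {w} = W) =
      (univ.filter fun w => w ∈ W) \ (univ.filter fun w => w ∈ U) := by
    ext w
    simp only [mem_filter, mem_univ, true_and, mem_sdiff]
    constructor
    · rintro rfl
      refine ⟨Submodule.mem_sup_right (Submodule.mem_span_singleton_self _), fun hw => ?_⟩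
      rw [sup_eq_left.2 (by rwa [Submodule.span_singleton_le_iff_mem])] at hU
      omega
    · rintro ⟨hw, hwU⟩
      refine Submodule.eq_of_le_of_finrank_eq
        (sup_le hUW (by rwa [Submodule.span_singleton_le_iff_mem])) ?_
      rw [hU]
      exact Submodule.finrank_sup_span_singleton hwU
  rw [hset, card_sdiff_of_subset, card_filter_mem_eq, card_filter_mem_eq]
  intro w
  simpa using fun h => hUW h

open Module Finset in
/-- A nonzero vector of a 3-dimensional space extends to a spanning triple in
`(q³ - q)(q³ - q²)` ways. -/
theorem card_completions {F V : Type*} [Field F] [Fintype F] [AddCommGroup V] [Module F V]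
    [Fintype V] [DecidableEq (Submodule F V)] (W : Submodule F V) (hW : finrank F W = 3) (u : V)
    (hu : u ∈ W) (hu0 : u ≠ 0) :
    ∑ v, (univ.filter fun w =>
        Submodule.span F {u} ⊔ Submodule.span F {v} ⊔ Submodule.span F {w} = W).card =
      (Fintype.card F ^ 3 - Fintype.card F) * (Fintype.card F ^ 3 - Fintype.card F ^ 2) := by
  classical
  have hfu : finrank F (Submodule.span F {u}) = 1 := finrank_span_singleton hu0
  have huW : Submodule.span F {u} ≤ W := by rwa [Submodule.span_singleton_le_iff_mem]
  have hterm : ∀ v, (univ.filter fun w =>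
        Submodule.span F {u} ⊔ Submodule.span F {v} ⊔ Submodule.span F {w} = W).card =
      if v ∈ (univ.filter fun v => v ∈ W) \ (univ.filter fun v => v ∈ Submodule.span F {u}) then
        Fintype.card F ^ 3 - Fintype.card F ^ 2 else 0 := by
    intro v
    have hmem : v ∈ (univ.filter fun v => v ∈ W) \
        (univ.filter fun v => v ∈ Submodule.span F {u}) ↔ v ∈ W ∧ v ∉ Submodule.span F {u} := by
      simp
    simp only [hmem]
    split_ifs with h
    · have h2 : finrank F (Submodule.span F {u} ⊔ Submodule.span F {v} : Submodule F V) = 2 := by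
        rw [Submodule.finrank_sup_span_singleton h.2, hfu]
      rw [card_sup_span_eq _ _ (by rw [hW, h2])
        (sup_le huW (by rw [Submodule.span_singleton_le_iff_mem]; exact h.1)), hW, h2]
    · rw [card_eq_zero, filter_eq_empty_iff]
      rintro w - rfl
      apply h
      refine ⟨Submodule.mem_sup_left (Submodule.mem_sup_right
        (Submodule.mem_span_singleton_self _)), fun hv => ?_⟩
      rw [sup_eq_left.2 (by rwa [Submodule.span_singleton_le_iff_mem] :
        Submodule.span F {v} ≤ Submodule.span F {u})] at hW
      by_cases hw : w ∈ Submodule.span F {u}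
      · rw [sup_eq_left.2 (by rwa [Submodule.span_singleton_le_iff_mem]), hfu] at hW
        omega
      · rw [Submodule.finrank_sup_span_singleton hw, hfu] at hW
        omega
  rw [sum_congr rfl fun v _ => hterm v, ← sum_filter, sum_const, smul_eq_mul]
  congr 1
  rw [filter_mem_eq_inter, univ_inter, card_sdiff_of_subset, card_filter_mem_eq,
    card_filter_mem_eq, hW, hfu, pow_one]
  intro w
  simpa using fun h => huW h

open Module in
theorem finrank_span_singleton_le_one {F V : Type*} [Field F] [AddCommGroup V] [Module F V]
    (v : V) : finrank F (Submodule.span F {v}) ≤ 1 :=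
  (finrank_span_le_card ({v} : Set V)).trans (by simp)

open Module Finset in
/-- Change of variables from spanning triples to pairs consisting of a cube and a point of it other
than `x`. -/
theorem sum_cubeThrough {F V : Type*} [Field F] [Fintype F] [AddCommGroup V] [Module F V]
    [Fintype V] [DecidableEq V] [DecidableEq (AffineSubspace F V)] (x : V)
    (A : Finset (AffineSubspace F V)) [∀ C : AffineSubspace F V, DecidablePred (· ∈ C)]
    (hA : ∀ C ∈ A, x ∈ C ∧ finrank F C.direction = 3) (φ : AffineSubspace F V → V → ℝ) :
    ∑ u, ∑ v, ∑ w, (if cubeThrough x u v w ∈ A then φ (cubeThrough x u v w) u else 0) =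
      (((Fintype.card F ^ 3 - Fintype.card F) *
        (Fintype.card F ^ 3 - Fintype.card F ^ 2) : ℕ) : ℝ) *
        ∑ C ∈ A, ∑ u ∈ univ.filter (fun u => u ≠ 0 ∧ x + u ∈ C), φ C u := by
  classical
  have h1 : ∀ u v w, (if cubeThrough x u v w ∈ A then φ (cubeThrough x u v w) u else 0) =
      ∑ C ∈ A, if cubeThrough x u v w = C then φ C u else 0 := by
    intro u v w
    rw [sum_ite_eq]
  have h2 : ∀ u, ∑ v, ∑ w, ∑ C ∈ A, (if cubeThrough x u v w = C then φ C u else 0) =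
      ∑ C ∈ A, φ C u * ((∑ v, (univ.filter fun w => cubeThrough x u v w = C).card : ℕ) : ℝ) := by
    intro u
    have : ∀ v, ∑ w, ∑ C ∈ A, (if cubeThrough x u v w = C then φ C u else 0) =
        ∑ C ∈ A, ∑ w, (if cubeThrough x u v w = C then φ C u else 0) := fun v => sum_comm
    simp_rw [this]
    rw [sum_comm]
    refine sum_congr rfl fun C _ => ?_
    push_cast
    rw [mul_sum]
    refine sum_congr rfl fun v _ => ?_
    rw [← sum_filter, sum_const, nsmul_eq_mul, mul_comm]
  simp_rw [h1, h2]
  rw [sum_comm, mul_sum]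
  refine sum_congr rfl fun C hC => ?_
  obtain ⟨hx, hC3⟩ := hA C hC
  rw [sum_filter, mul_sum]
  refine sum_congr rfl fun u _ => ?_
  have hiff : ∀ v w, cubeThrough x u v w = C ↔
      Submodule.span F {u} ⊔ Submodule.span F {v} ⊔ Submodule.span F {w} = C.direction := by
    intro v w
    constructor
    · rintro rfl
      rw [cubeThrough, AffineSubspace.direction_mk']
    · intro h
      rw [cubeThrough, h, AffineSubspace.mk'_eq hx]
  have hxu : x + u ∈ C ↔ u ∈ C.direction := by
    rw [← AffineSubspace.vsub_right_mem_direction_iff_mem hx]; simp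
  simp only [hiff, hxu]
  split_ifs with h
  · rw [card_completions _ hC3 u h.2 h.1, mul_comm]
  · have : ∀ v, (univ.filter fun w => Submodule.span F {u} ⊔ Submodule.span F {v} ⊔
        Submodule.span F {w} = C.direction).card = 0 := by
      intro v
      rw [card_eq_zero, filter_eq_empty_iff]
      intro w _ hw
      have huC : u ∈ C.direction := by
        rw [← hw]
        exact Submodule.mem_sup_left (Submodule.mem_sup_left
          (Submodule.mem_span_singleton_self _))
      have hu0 : u = 0 := by tauto
      have hfin : finrank F (Submodule.span F {u} ⊔ Submodule.span F {v} ⊔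
        Submodule.span F {w} : Submodule F V) ≤ 2 := by
        have k1 := Submodule.finrank_add_le_finrank_add_finrank
          (Submodule.span F {u} ⊔ Submodule.span F {v}) (Submodule.span F {w})
        have k2 := Submodule.finrank_add_le_finrank_add_finrank
          (Submodule.span F {u}) (Submodule.span F {v})
        have k3 : finrank F (Submodule.span F {u}) = 0 := by rw [hu0]; simp
        have k4 := finrank_span_singleton_le_one (F := F) v
        have k5 := finrank_span_singleton_le_one (F := F) w
        omega
      rw [hw, hC3] at hfin
      omega
    simp [this]

open Module Finset in
/-- Almost all triples of directions span a cube. -/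
theorem card_cubeThrough_ge {F V : Type*} [Field F] [Fintype F] [AddCommGroup V] [Module F V]
    [Fintype V] [DecidableEq V] (x : V) :
    (Fintype.card V : ℝ) ^ 3 - Fintype.card V ^ 2 * (1 + Fintype.card F + Fintype.card F ^ 2) ≤
    ∑ u : V, ∑ v : V, ∑ w : V,
      (if finrank F (cubeThrough (F := F) x u v w).direction = 3 then 1 else 0 : ℝ) := by
  classical
  have hpt : ∀ u v w : V, (1 : ℝ) ≤
      (if finrank F (cubeThrough (F := F) x u v w).direction = 3 then 1 else 0 : ℝ) +
      ((if u = 0 then 1 else 0) + (if v ∈ Submodule.span F {u} then 1 else 0) +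
        (if w ∈ Submodule.span F {u} ⊔ Submodule.span F {v} then 1 else 0)) := by
    intro u v w
    by_cases h1 : u = 0
    · simp only [h1, if_true]; split_ifs <;> norm_num
    by_cases h2 : v ∈ Submodule.span F {u}
    · simp only [h2, if_true]; split_ifs <;> norm_num
    by_cases h3 : w ∈ Submodule.span F {u} ⊔ Submodule.span F {v}
    · simp only [h3, if_true]; split_ifs <;> norm_num
    have : finrank F (cubeThrough (F := F) x u v w).direction = 3 := by
      rw [cubeThrough, AffineSubspace.direction_mk', Submodule.finrank_sup_span_singleton h3,
        Submodule.finrank_sup_span_singleton h2, finrank_span_singleton h1]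
    rw [if_pos this]
    split_ifs <;> norm_num
  have hsum := sum_le_sum fun u (_ : u ∈ (univ : Finset V)) => sum_le_sum fun v
    (_ : v ∈ (univ : Finset V)) => sum_le_sum fun w (_ : w ∈ (univ : Finset V)) => hpt u v w
  simp only [sum_add_distrib] at hsum
  have hq : (1 : ℝ) ≤ Fintype.card F := by exact_mod_cast Fintype.card_pos
  have e0 : ∑ _u : V, ∑ _v : V, ∑ _w : V, (1 : ℝ) = Fintype.card V ^ 3 := by simp; ring
  have e1 : ∑ u : V, ∑ _v : V, ∑ _w : V, (if u = 0 then (1 : ℝ) else 0) =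
      Fintype.card V ^ 2 := by
    simp [sq]
  have e2 : ∑ u : V, ∑ v : V, ∑ _w : V, (if v ∈ Submodule.span F {u} then (1 : ℝ) else 0) ≤
      Fintype.card V ^ 2 * Fintype.card F := by
    calc _ ≤ ∑ u : V, (Fintype.card V : ℝ) * Fintype.card F := by
          refine sum_le_sum fun u _ => ?_
          simp only [sum_const, card_univ, nsmul_eq_mul, ← mul_sum]
          rw [sum_boole, card_filter_mem_eq]
          gcongr
          exact (Nat.pow_le_pow_right Fintype.card_pos
            (finrank_span_singleton_le_one (F := F) u)).trans (pow_one _).le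
      _ = _ := by simp; ring
  have e3 : ∑ u : V, ∑ v : V, ∑ w : V,
      (if w ∈ Submodule.span F {u} ⊔ Submodule.span F {v} then (1 : ℝ) else 0) ≤
      Fintype.card V ^ 2 * Fintype.card F ^ 2 := by
    calc _ ≤ ∑ u : V, ∑ v : V, (Fintype.card F : ℝ) ^ 2 := by
          refine sum_le_sum fun u _ => sum_le_sum fun v _ => ?_
          rw [sum_boole, card_filter_mem_eq]
          push_cast
          refine pow_le_pow_right₀ hq ?_
          have k2 := Submodule.finrank_add_le_finrank_add_finrank
            (Submodule.span F {u}) (Submodule.span F {v})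
          have k4 := finrank_span_singleton_le_one (F := F) v
          have k5 := finrank_span_singleton_le_one (F := F) u
          omega
      _ = _ := by simp; ring
  rw [e0, e1] at hsum
  linarith

/-! ### Disagreement of a random cube with the plurality -/

noncomputable instance affineSubspaceFintype {F V : Type*} [Field F] [AddCommGroup V] [Module F V]
    [Finite V] : Fintype (AffineSubspace F V) :=
  haveI : Finite (AffineSubspace F V) :=
    Finite.of_injective (fun C : AffineSubspace F V => (C : Set V)) SetLike.coe_injective
  Fintype.ofFinite _

theorem add_mem_iff_mem_direction {F V : Type*} [Field F] [AddCommGroup V] [Module F V]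
    {C : AffineSubspace F V} {x : V} (hx : x ∈ C) (u : V) : x + u ∈ C ↔ u ∈ C.direction := by
  rw [← AffineSubspace.vsub_right_mem_direction_iff_mem hx]; simp

theorem line_le_iff {F V : Type*} [Field F] [AddCommGroup V] [Module F V]
    {C : AffineSubspace F V} {x : V} (hx : x ∈ C) (u : V) :
    AffineSubspace.mk' x (Submodule.span F {u}) ≤ C ↔ x + u ∈ C := by
  constructor
  · intro h
    refine h ?_
    rw [AffineSubspace.mem_mk', vsub_eq_sub, add_sub_cancel_left]
    exact Submodule.mem_span_singleton_self u
  · intro h z hz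
    rw [AffineSubspace.mem_mk', vsub_eq_sub] at hz
    rw [← AffineSubspace.vsub_right_mem_direction_iff_mem hx, vsub_eq_sub]
    refine (Submodule.span_singleton_le_iff_mem u _).2 ?_ hz
    rwa [← add_mem_iff_mem_direction hx]

open Finset Module Classical in
/-- Every line through `x` has `q - 1` nonzero direction vectors, so summing over the points of a
cube other than `x` is `q - 1` times summing over the lines of the cube through `x`. -/
theorem sum_lines_through {F : Type} [Field F] [Fintype F] {n : ℕ}
    (C : AffineSubspace F (Fin n → F)) {x : Fin n → F} (hx : x ∈ C)
    (φ : AffineSubspace F (Fin n → F) → ℝ) :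
    ∑ u ∈ univ.filter (fun u => u ≠ 0 ∧ x + u ∈ C),
        φ (AffineSubspace.mk' x (Submodule.span F {u})) =
      ((Fintype.card F : ℝ) - 1) *
        ∑ ℓ ∈ univ.filter (fun ℓ : AffineSubspace F (Fin n → F) =>
          IsLine F n ℓ ∧ x ∈ ℓ ∧ ℓ ≤ C), φ ℓ := by
  rw [← sum_fiberwise_of_maps_to (t := univ.filter (fun ℓ : AffineSubspace F (Fin n → F) =>
          IsLine F n ℓ ∧ x ∈ ℓ ∧ ℓ ≤ C))
    (g := fun u => AffineSubspace.mk' x (Submodule.span F {u}))]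
  · rw [mul_sum]
    refine sum_congr rfl fun ℓ hℓ => ?_
    simp only [mem_filter, mem_univ, true_and] at hℓ
    obtain ⟨⟨-, hl1⟩, hxl, hlC⟩ := hℓ
    rw [sum_congr rfl (g := fun _ => φ ℓ) (fun u hu => by rw [(mem_filter.1 hu).2]), sum_const,
      nsmul_eq_mul]
    congr 1
    have : ((univ.filter fun u => u ≠ 0 ∧ x + u ∈ C).filter fun u =>
        AffineSubspace.mk' x (Submodule.span F {u}) = ℓ) =
        (univ.filter fun u => u ∈ ℓ.direction).erase 0 := by
      ext u
      simp only [mem_filter, mem_univ, true_and, mem_erase]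
      constructor
      · rintro ⟨⟨h0, -⟩, rfl⟩
        refine ⟨h0, ?_⟩
        rw [AffineSubspace.direction_mk']
        exact Submodule.mem_span_singleton_self u
      · rintro ⟨h0, hu⟩
        have hxu : x + u ∈ ℓ := (add_mem_iff_mem_direction hxl u).2 hu
        refine ⟨⟨h0, hlC hxu⟩, ?_⟩
        rw [← AffineSubspace.mk'_eq hxl]
        congr 1
        refine Submodule.eq_of_le_of_finrank_eq
          ((Submodule.span_singleton_le_iff_mem _ _).2 hu) ?_
        rw [hl1, finrank_span_singleton h0]
    rw [this, card_erase_of_mem (by simp), card_filter_mem_eq, hl1, pow_one,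
      Nat.cast_sub Fintype.card_pos, Nat.cast_one]
  · intro u hu
    simp only [mem_filter, mem_univ, true_and] at hu ⊢
    refine ⟨⟨⟨x, AffineSubspace.self_mem_mk' _ _⟩, ?_⟩, AffineSubspace.self_mem_mk' _ _,
      (line_le_iff hx u).2 hu.2⟩
    rw [AffineSubspace.direction_mk', finrank_span_singleton hu.1]

open Finset Module Classical in
theorem card_ne_zero_mem {F : Type} [Field F] [Fintype F] {n : ℕ}
    (C : AffineSubspace F (Fin n → F)) {x : Fin n → F} (hx : x ∈ C)
    (hC : finrank F C.direction = 3) :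
    ((univ.filter (fun u => u ≠ 0 ∧ x + u ∈ C)).card : ℝ) = (Fintype.card F : ℝ) ^ 3 - 1 := by
  have : (univ.filter (fun u => u ≠ 0 ∧ x + u ∈ C)) =
      (univ.filter fun u => u ∈ C.direction).erase 0 := by
    ext u; simp [add_mem_iff_mem_direction hx]
  rw [this, card_erase_of_mem (by simp), card_filter_mem_eq, hC,
    Nat.cast_sub (Nat.pow_pos Fintype.card_pos)]
  simp

open Finset Module Classical in
/-- For an excellent pair, a random point of a random cube of `𝒞_{x,σ}` violates the plurality
value with probability at most `γ`: choose the point first; by the choice of `f` as a mode, two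
random cubes through it disagree there at least as often as one of them disagrees with `f`. -/
theorem disagreement_with_plurality {F : Type} [Field F] [Fintype F] {n : ℕ}
    (T : AffineSubspace F (Fin n → F) → (Fin n → F) → F) (x : Fin n → F) (σ : F) (γ : ℝ)
    (hexc : (∑ᶠ C₁ ∈ cubesVal F n T x σ,
      ∑ᶠ ℓ ∈ {ℓ : AffineSubspace F (Fin n → F) | IsLine F n ℓ ∧ x ∈ ℓ ∧ ℓ ≤ C₁},
        (({C₂ ∈ cubesVal F n T x σ | ℓ ≤ C₂ ∧ ¬ LineAgree F n T C₁ C₂ ℓ}.ncard : ℝ) /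
          ({C₂ ∈ cubesVal F n T x σ | ℓ ≤ C₂}.ncard : ℝ)))
      ≤ γ * (({p : AffineSubspace F (Fin n → F) × AffineSubspace F (Fin n → F) |
        p.1 ∈ cubesVal F n T x σ ∧ IsLine F n p.2 ∧ x ∈ p.2 ∧ p.2 ≤ p.1}).ncard : ℝ))
    (f : (Fin n → F) → F)
    (hf : ∀ y : Fin n → F, (cubesVal F n T x σ ∩ cubesOn F n y).Nonempty → ∀ v : F,
      {C ∈ cubesVal F n T x σ ∩ cubesOn F n y | T C y = v}.ncard ≤
        {C ∈ cubesVal F n T x σ ∩ cubesOn F n y | T C y = f y}.ncard)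
    (A : Finset (AffineSubspace F (Fin n → F))) (hA : ∀ C, C ∈ A ↔ C ∈ cubesVal F n T x σ) :
    ∑ C ∈ A, ∑ u ∈ univ.filter (fun u => u ≠ 0 ∧ x + u ∈ C),
        (if T C (x + u) ≠ f (x + u) then (1 : ℝ) else 0) ≤
      γ * (A.card * ((Fintype.card F : ℝ) ^ 3 - 1)) := by
  have hq : 0 < (Fintype.card F : ℝ) - 1 := by
    have : 1 < Fintype.card F := Fintype.one_lt_card
    have : (1 : ℝ) < Fintype.card F := by exact_mod_cast this
    linarith
  have hAset : cubesVal F n T x σ = (A : Set _) := by ext C; simp [hA]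
  have hAx : ∀ C ∈ A, x ∈ C := fun C hC => ((hA C).1 hC).2.1
  have hA3 : ∀ C ∈ A, finrank F C.direction = 3 := fun C hC => ((hA C).1 hC).1.2
  let L : AffineSubspace F (Fin n → F) → Finset (AffineSubspace F (Fin n → F)) := fun C =>
    univ.filter (fun ℓ => IsLine F n ℓ ∧ x ∈ ℓ ∧ ℓ ≤ C)
  let r : AffineSubspace F (Fin n → F) → AffineSubspace F (Fin n → F) → ℝ := fun C₁ ℓ =>
    ((A.filter fun C₂ => ℓ ≤ C₂ ∧ ¬ LineAgree F n T C₁ C₂ ℓ).card : ℝ) /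
      ((A.filter fun C₂ => ℓ ≤ C₂).card : ℝ)
  have hexc' : ∑ C ∈ A, ∑ ℓ ∈ L C, r C ℓ ≤ γ * ∑ C ∈ A, ∑ ℓ ∈ L C, (1 : ℝ) := by
    convert hexc using 1
    · rw [hAset, finsum_mem_coe_finset]
      refine sum_congr rfl fun C hC => ?_
      rw [finsum_mem_eq_toFinset_sum]
      refine sum_congr ?_ fun ℓ _ => ?_
      · ext ℓ; simp [L]
      · simp only [r]
        rw [Set.ncard_eq_toFinset_card', Set.ncard_eq_toFinset_card']
        congr 3
        · ext C; simp
        · ext C; simp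
    · congr 1
      rw [Set.ncard_eq_toFinset_card']
      simp only [sum_const, nsmul_eq_mul, mul_one]
      rw [← Nat.cast_sum, ← card_sigma]
      congr 1
      refine card_bij (fun p _ => (p.1, p.2)) ?_ ?_ ?_
      · rintro ⟨C, ℓ⟩ h
        simpa [L, hAset] using h
      · rintro ⟨C, ℓ⟩ - ⟨C', ℓ'⟩ - h
        simpa using h
      · rintro ⟨C, ℓ⟩ h
        exact ⟨⟨C, ℓ⟩, by simpa [L, hAset] using h, rfl⟩
  -- a line through `x` is sampled by a nonzero direction `u`, that is, by its point `x + u`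
  let line : (Fin n → F) → AffineSubspace F (Fin n → F) := fun u =>
    AffineSubspace.mk' x (Submodule.span F {u})
  have hpts : ∑ C ∈ A, ∑ u ∈ univ.filter (fun u => u ≠ 0 ∧ x + u ∈ C), r C (line u) ≤
      γ * (A.card * ((Fintype.card F : ℝ) ^ 3 - 1)) := by
    have e1 : ∑ C ∈ A, ∑ u ∈ univ.filter (fun u => u ≠ 0 ∧ x + u ∈ C), r C (line u) =
        ((Fintype.card F : ℝ) - 1) * ∑ C ∈ A, ∑ ℓ ∈ L C, r C ℓ := by
      rw [mul_sum]
      exact sum_congr rfl fun C hC => sum_lines_through C (hAx C hC) (r C)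
    have e2 : A.card * ((Fintype.card F : ℝ) ^ 3 - 1) =
        ((Fintype.card F : ℝ) - 1) * ∑ C ∈ A, ∑ ℓ ∈ L C, (1 : ℝ) := by
      rw [mul_sum, ← nsmul_eq_mul, ← sum_const]
      refine sum_congr rfl fun C hC => ?_
      rw [← sum_lines_through C (hAx C hC) fun _ => 1, ← card_ne_zero_mem C (hAx C hC) (hA3 C hC)]
      simp
    rw [e1, e2]
    nlinarith [mul_le_mul_of_nonneg_left hexc' hq.le]
  refine le_trans ?_ hpts
  have swap : ∀ ψ : AffineSubspace F (Fin n → F) → (Fin n → F) → ℝ,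
      ∑ C ∈ A, ∑ u ∈ univ.filter (fun u => u ≠ 0 ∧ x + u ∈ C), ψ C u =
      ∑ u ∈ univ.filter (fun u : Fin n → F => u ≠ 0), ∑ C ∈ A.filter (fun C => x + u ∈ C), ψ C u :=
    fun ψ => sum_comm' (by intro C u; simp; tauto)
  rw [swap, swap]
  refine sum_le_sum fun u _ => ?_
  set B := A.filter (fun C => x + u ∈ C) with hB
  have hline : (A.filter fun C₂ => line u ≤ C₂) = B :=
    filter_congr fun C hC => line_le_iff (hAx C hC) u
  rcases B.eq_empty_or_nonempty with hemp | hne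
  · rw [hemp]; simp
  have hBpos : (0 : ℝ) < B.card := by exact_mod_cast hne.card_pos
  have hBset : cubesVal F n T x σ ∩ cubesOn F n (x + u) = (B : Set _) := by
    ext C
    simp only [hB, Set.mem_inter_iff, ← hA, cubesOn, Set.mem_ofPred_eq, coe_filter]
    exact ⟨fun h => ⟨h.1, h.2.2⟩, fun h => ⟨h.1, ((hA C).1 h.1).1, h.2⟩⟩
  have hmode := card_mul_ne_mode_le B (fun C => T C (x + u)) (f (x + u)) (by
    intro w
    have := hf (x + u) (by rw [hBset]; exact_mod_cast hne) w
    rw [hBset, Set.ncard_eq_toFinset_card', Set.ncard_eq_toFinset_card'] at this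
    convert this using 2 <;> · ext C; simp)
  calc ∑ C ∈ B, (if T C (x + u) ≠ f (x + u) then (1 : ℝ) else 0)
      = (B.card * (B.filter fun C => T C (x + u) ≠ f (x + u)).card : ℕ) / (B.card : ℝ) := by
        rw [sum_boole]; push_cast; field_simp
    _ ≤ ((∑ C ∈ B, (B.filter fun C' => T C' (x + u) ≠ T C (x + u)).card : ℕ) : ℝ) / B.card := by
        gcongr
    _ ≤ ∑ C ∈ B, r C (line u) := by
        push_cast
        rw [sum_div]
        refine sum_le_sum fun C _ => ?_
        simp only [r, hline]
        gcongr
        intro C' hC'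
        simp only [mem_filter, hB] at hC' ⊢
        refine ⟨hC'.1.1, (line_le_iff (hAx C' hC'.1.1) u).2 hC'.1.2, fun h => hC'.2 ?_⟩
        exact (h (x + u) ((line_le_iff (AffineSubspace.self_mem_mk' _ _) u).1 le_rfl)).symm

/-! ### Counting pairs that violate extrapolation -/

open Finset Module Classical in
/-- A pair `(u, v)` violating the extrapolation identity meets, in each of its cubes from `A`, one of
`d + 2` points `x + u + s • v` at which `T` and `f` differ. Shifting `u` by `s • v` preserves the cube,
so each `s` contributes at most the total number of disagreeing triples. -/
theorem bad_pairs_weight {F : Type} [Field F] [Fintype F] {n d : ℕ}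
    (T : AffineSubspace F (Fin n → F) → (Fin n → F) → F) (hT : DegTable F n d T)
    (x : Fin n → F) (A : Finset (AffineSubspace F (Fin n → F))) (hA : ∀ C ∈ A, IsCube F n C)
    (f : (Fin n → F) → F) (S : Finset F) (hS : 0 ∉ S) (hSd : S.card = d + 1) :
    ∑ p ∈ univ.filter (fun p : (Fin n → F) × (Fin n → F) =>
        f (x + p.1) ≠ extrap S fun s => f (x + p.1 + s • p.2)),
      ∑ w, (if cubeThrough x p.1 p.2 w ∈ A then (1 : ℝ) else 0) ≤
    (d + 2) * ∑ u, ∑ v, ∑ w, (if cubeThrough x u v w ∈ A then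
      (if T (cubeThrough x u v w) (x + u) ≠ f (x + u) then (1 : ℝ) else 0) else 0) := by
  set e : (Fin n → F) → (Fin n → F) → (Fin n → F) → ℝ := fun u v w =>
    if cubeThrough x u v w ∈ A then
      (if T (cubeThrough x u v w) (x + u) ≠ f (x + u) then (1 : ℝ) else 0) else 0 with he
  have he0 : ∀ u v w, 0 ≤ e u v w := by
    intro u v w; simp only [he]; split_ifs <;> norm_num
  have hpt : ∀ p ∈ univ.filter (fun p : (Fin n → F) × (Fin n → F) =>
        f (x + p.1) ≠ extrap S fun s => f (x + p.1 + s • p.2)), ∀ w,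
      (if cubeThrough x p.1 p.2 w ∈ A then (1 : ℝ) else 0) ≤
        ∑ s ∈ insert 0 S, e (p.1 + s • p.2) p.2 w := by
    rintro ⟨u, v⟩ hp w
    simp only [mem_filter, mem_univ, true_and] at hp
    split_ifs with hC
    · by_contra hlt
      apply hp
      have hgood : ∀ s ∈ insert 0 S,
          T (cubeThrough x u v w) (x + u + s • v) = f (x + u + s • v) := by
        intro s hs
        by_contra hne
        apply hlt
        refine le_trans ?_ (single_le_sum (f := fun s => e (u + s • v) v w)
          (fun s _ => he0 _ _ _) hs)
        simp only [he, cubeThrough_add_smul_left, if_pos hC, ← add_assoc]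
        rw [if_pos hne]
      obtain ⟨P, hP, hPe⟩ := hT _ (hA _ hC)
      obtain ⟨p, hp, hpe⟩ := eval_line P hP (x + u) v
      have hline : ∀ s ∈ insert 0 S, f (x + u + s • v) = p.eval s := fun s hs => by
        rw [← hgood s hs, hPe _ (mem_cubeThrough x u v w s), hpe]
      rw [extrap_eq_of_poly S _ p
        (lt_of_le_of_lt (Polynomial.degree_le_of_natDegree_le hp)
          (by rw [hSd]; exact_mod_cast Nat.lt_succ_self d))
        fun s hs => hline s (mem_insert_of_mem hs)]
      simpa using hline 0 (mem_insert_self _ _)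
    · exact sum_nonneg fun s _ => he0 _ _ _
  have hshift : ∀ s : F, ∑ p : (Fin n → F) × (Fin n → F), ∑ w, e (p.1 + s • p.2) p.2 w =
      ∑ u, ∑ v, ∑ w, e u v w := by
    intro s
    rw [Fintype.sum_prod_type, sum_comm, sum_comm (f := fun u v => ∑ w, e u v w)]
    refine sum_congr rfl fun v _ => ?_
    exact Equiv.sum_comp (Equiv.addRight (s • v)) fun u => ∑ w, e u v w
  calc _ ≤ ∑ p ∈ univ.filter (fun p : (Fin n → F) × (Fin n → F) =>
        f (x + p.1) ≠ extrap S fun s => f (x + p.1 + s • p.2)),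
        ∑ w, ∑ s ∈ insert 0 S, e (p.1 + s • p.2) p.2 w :=
        sum_le_sum fun p hp => sum_le_sum fun w _ => hpt p hp w
    _ ≤ ∑ p : (Fin n → F) × (Fin n → F), ∑ w, ∑ s ∈ insert 0 S, e (p.1 + s • p.2) p.2 w :=
        sum_le_sum_of_subset_of_nonneg (subset_univ _) fun p _ _ =>
          sum_nonneg fun w _ => sum_nonneg fun s _ => he0 _ _ _
    _ = ∑ s ∈ insert 0 S, ∑ p : (Fin n → F) × (Fin n → F), ∑ w, e (p.1 + s • p.2) p.2 w := by
        rw [sum_comm (s := insert 0 S)]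
        exact sum_congr rfl fun p _ => sum_comm
    _ = _ := by
        simp only [hshift, sum_const, card_insert_of_notMem hS, hSd, nsmul_eq_mul]
        push_cast; ring

open Finset Module Classical in
/-- The number of bad pairs. The first term bounds the pairs with at most `9 / 10` of the average
number of completions to a cube in `A`, the second one the remaining bad pairs. -/
theorem bad_pairs_le {F : Type} [Field F] [Fintype F] {n d : ℕ}
    (T : AffineSubspace F (Fin n → F) → (Fin n → F) → F) (hT : DegTable F n d T)
    (x : Fin n → F) (A : Finset (AffineSubspace F (Fin n → F))) (hA : ∀ C ∈ A, IsCube F n C)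
    (f : (Fin n → F) → F) (γ W : ℝ)
    (hW : W = ∑ u, ∑ v, ∑ w, (if cubeThrough x u v w ∈ A then (1 : ℝ) else 0)) (hW0 : 0 < W)
    (hdis : ∑ u, ∑ v, ∑ w, (if cubeThrough x u v w ∈ A then
      (if T (cubeThrough x u v w) (x + u) ≠ f (x + u) then (1 : ℝ) else 0) else 0) ≤ γ * W)
    (S : Finset F) (hS : 0 ∉ S) (hSd : S.card = d + 1) :
    ((univ.filter (fun p : (Fin n → F) × (Fin n → F) =>
        f (x + p.1) ≠ extrap S fun s => f (x + p.1 + s • p.2))).card : ℝ) ≤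
      100 * Fintype.card (Fin n → F) ^ 5 / (((Fintype.card F : ℝ) - 1) * W) +
        (10 / 9) * (d + 2) * γ * Fintype.card (Fin n → F) ^ 2 := by
  set N : ℝ := ((Fintype.card (Fin n → F) : ℕ) : ℝ) with hN
  have hNpos : 0 < N := by rw [hN]; exact_mod_cast Fintype.card_pos
  have hq : 0 < (Fintype.card F : ℝ) - 1 := by
    have : 1 < Fintype.card F := Fintype.one_lt_card
    have : (1 : ℝ) < Fintype.card F := by exact_mod_cast this
    linarith
  set Bad := univ.filter (fun p : (Fin n → F) × (Fin n → F) =>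
        f (x + p.1) ≠ extrap S fun s => f (x + p.1 + s • p.2)) with hBad
  set a : (Fin n → F) → (Fin n → F) → (Fin n → F) → ℝ := fun u v w =>
    if cubeThrough x u v w ∈ A then 1 else 0 with ha
  have hW' : ∑ u, ∑ v, ∑ w, a u v w = W := hW.symm
  set L := univ.filter (fun p : (Fin n → F) × (Fin n → F) =>
    ∑ w, a p.1 p.2 w ≤ (1 - 1 / 10) * (W / N ^ 2)) with hL
  have hLcard : (L.card : ℝ) ≤ 100 * N ^ 5 / (((Fintype.card F : ℝ) - 1) * W) := by
    have := light_pairs (F := F) a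
      (fun u v w => by simp only [ha]; split_ifs <;> norm_num)
      (fun t u v w => by simp only [ha, cubeThrough_add_smul_mid])
      (fun t u v w => by simp only [ha, cubeThrough_add_smul_left]) L (1 / 10) (by norm_num)
      (fun p hp => by rw [hW']; exact (mem_filter.1 hp).2)
    rw [hW', ← hN] at this
    rw [le_div_iff₀ (by positivity)]
    have h2 : W * (L.card * (((Fintype.card F : ℝ) - 1) * W)) ≤ W * (100 * N ^ 5) := by linarith
    exact le_of_mul_le_mul_left h2 hW0
  have hheavy : ((Bad \ L).card : ℝ) ≤ (10 / 9) * (d + 2) * γ * N ^ 2 := by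
    have h1 : ((Bad \ L).card : ℝ) * ((1 - 1 / 10) * (W / N ^ 2)) ≤ (d + 2) * (γ * W) := by
      rw [← nsmul_eq_mul]
      calc _ ≤ ∑ p ∈ Bad \ L, ∑ w, a p.1 p.2 w := by
            refine card_nsmul_le_sum _ _ _ fun p hp => ?_
            simp only [mem_sdiff, hL, mem_filter, mem_univ, true_and, not_le] at hp
            exact hp.2.le
        _ ≤ ∑ p ∈ Bad, ∑ w, a p.1 p.2 w :=
            sum_le_sum_of_subset_of_nonneg sdiff_subset fun p _ _ => sum_nonneg fun w _ => by
              simp only [ha]; split_ifs <;> norm_num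
        _ ≤ _ := bad_pairs_weight T hT x A hA f S hS hSd
        _ ≤ _ := by gcongr
    have h2 : W * (Bad \ L).card ≤ W * ((10 / 9) * (d + 2) * γ * N ^ 2) := by
      have : ((Bad \ L).card : ℝ) * ((1 - 1 / 10) * (W / N ^ 2)) =
        (W * (Bad \ L).card) * (9 / 10) / N ^ 2 := by ring
      rw [this, div_le_iff₀ (by positivity)] at h1
      linarith
    exact le_of_mul_le_mul_left h2 hW0
  have hsub : Bad ⊆ L ∪ (Bad \ L) := by
    intro p hp
    by_cases h : p ∈ L <;> simp [h, hp]
  calc (Bad.card : ℝ) ≤ L.card + (Bad \ L).card := by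
        exact_mod_cast (card_le_card hsub).trans (card_union_le _ _)
    _ ≤ _ := add_le_add hLcard hheavy

open Finset Module Classical in
/-- Each cube of `A` through `x` comes from the same number of triples. -/
theorem weight_eq {F : Type} [Field F] [Fintype F] {n : ℕ} (x : Fin n → F)
    (A : Finset (AffineSubspace F (Fin n → F))) (hA : ∀ C ∈ A, C ∈ cubesOn F n x) :
    ∑ u, ∑ v, ∑ w, (if cubeThrough x u v w ∈ A then (1 : ℝ) else 0) =
      (((Fintype.card F ^ 3 - Fintype.card F) *
        (Fintype.card F ^ 3 - Fintype.card F ^ 2) : ℕ) : ℝ) *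
        (A.card * ((Fintype.card F : ℝ) ^ 3 - 1)) := by
  rw [sum_cubeThrough x A (fun C hC => ⟨(hA C hC).2, (hA C hC).1.2⟩) fun _ _ => 1]
  congr 1
  rw [← nsmul_eq_mul, ← sum_const]
  refine sum_congr rfl fun C hC => ?_
  rw [← card_ne_zero_mem C (hA C hC).2 (hA C hC).1.2]
  simp

open Finset Module Classical in
/-- A set of cubes of measure at least `m` has, up to degenerate triples, at least `m N³` triples. -/
theorem weight_ge {F : Type} [Field F] [Fintype F] {n : ℕ} (x : Fin n → F)
    (A : Finset (AffineSubspace F (Fin n → F))) (hA : ∀ C ∈ A, C ∈ cubesOn F n x) (m : ℝ)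
    (hm : 0 ≤ m) (hmA : m ≤ muX F n x A) :
    m * ((Fintype.card (Fin n → F) : ℝ) ^ 3 - Fintype.card (Fin n → F) ^ 2 *
        (1 + Fintype.card F + Fintype.card F ^ 2)) ≤
      ∑ u, ∑ v, ∑ w, (if cubeThrough x u v w ∈ A then (1 : ℝ) else 0) := by
  set M := univ.filter (fun C => C ∈ cubesOn F n x) with hM
  have hMx : ∀ C ∈ M, C ∈ cubesOn F n x := fun C hC => (mem_filter.1 hC).2
  have hcard : m * M.card ≤ A.card := by
    have hcubes : (cubesOn F n x).ncard = M.card := by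
      rw [Set.ncard_eq_toFinset_card']
      congr 1; ext C; simp [hM]
    rw [muX, hcubes, Set.ncard_coe_finset] at hmA
    rcases Nat.eq_zero_or_pos M.card with h0 | h0
    · rw [h0]; simp
    · rwa [le_div_iff₀ (by exact_mod_cast h0)] at hmA
  have hq : 0 ≤ (Fintype.card F : ℝ) ^ 3 - 1 := by
    have : (1 : ℝ) ≤ Fintype.card F := by exact_mod_cast Fintype.card_pos
    linarith [one_le_pow₀ this (n := 3)]
  have hall := card_cubeThrough_ge (F := F) x
  have hind : ∀ u v w, (if finrank F (cubeThrough (F := F) x u v w).direction = 3 then 1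
      else 0 : ℝ) = if cubeThrough x u v w ∈ M then 1 else 0 := by
    intro u v w
    have hx : x ∈ cubeThrough (F := F) x u v w := AffineSubspace.self_mem_mk' _ _
    have : cubeThrough x u v w ∈ M ↔ finrank F (cubeThrough (F := F) x u v w).direction = 3 := by
      simp only [hM, mem_filter, mem_univ, true_and]
      exact ⟨fun h => h.1.2, fun h => ⟨⟨⟨x, hx⟩, h⟩, hx⟩⟩
    simp only [this]
  simp only [hind] at hall
  rw [weight_eq x M hMx] at hall
  rw [weight_eq x A hA]
  set K : ℝ := (((Fintype.card F ^ 3 - Fintype.card F) *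
        (Fintype.card F ^ 3 - Fintype.card F ^ 2) : ℕ) : ℝ) with hK
  have hK0 : 0 ≤ K := Nat.cast_nonneg _
  calc _ ≤ m * (K * (M.card * ((Fintype.card F : ℝ) ^ 3 - 1))) := by gcongr
    _ = K * ((m * M.card) * ((Fintype.card F : ℝ) ^ 3 - 1)) := by ring
    _ ≤ _ := by gcongr

/-- The numerical estimate: the light pairs and the bad heavy pairs together make up a fraction
at most `17/(5000 d²) = 3.4 d γ` of all pairs. -/
theorem numeric_bound {d q N W : ℝ} (hd : 1 ≤ d) (hq : 1000 ≤ q) (hN : q ^ 6 ≤ N)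
    (hW : 10 ^ 7 * d ^ 6 / q / 5 * (N ^ 3 - N ^ 2 * (1 + q + q ^ 2)) ≤ W) :
    100 * N ^ 5 / ((q - 1) * W) + (10 / 9) * (d + 2) * (1 / (1000 * d ^ 3)) * N ^ 2 ≤
      17 / (5000 * d ^ 2) * N ^ 2 := by
  have hq0 : 0 < q := by linarith
  have hN0 : 0 < N := lt_of_lt_of_le (by positivity) hN
  have h1 : 1000 * (1 + q + q ^ 2) ≤ N := by
    refine le_trans ?_ hN
    have : q ^ 6 = q ^ 4 * q ^ 2 := by ring
    have h4 : (1000 : ℝ) ^ 4 ≤ q ^ 4 := pow_le_pow_left₀ (by norm_num) hq 4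
    nlinarith [mul_le_mul_of_nonneg_right h4 (sq_nonneg q)]
  have h2 : 999 / 1000 * N ^ 3 ≤ N ^ 3 - N ^ 2 * (1 + q + q ^ 2) := by
    nlinarith [mul_le_mul_of_nonneg_left h1 (sq_nonneg N)]
  have h3 : 1998000 * d ^ 6 / q * N ^ 3 ≤ W := by
    refine le_trans ?_ hW
    calc _ = 10 ^ 7 * d ^ 6 / q / 5 * (999 / 1000 * N ^ 3) := by ring
      _ ≤ _ := by gcongr
  have hd36 : d ^ 3 ≤ d ^ 6 := pow_le_pow_right₀ hd (by norm_num)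
  have hlight : 100 * N ^ 5 / ((q - 1) * W) ≤ 6 / 100 * (1 / (1000 * d ^ 3)) * N ^ 2 := by
    have hden : (q - 1) * (1998000 * d ^ 6 / q * N ^ 3) ≤ (q - 1) * W := by
      gcongr; linarith
    have hge : 1990000 * d ^ 3 * N ^ 3 ≤ (q - 1) * (1998000 * d ^ 6 / q * N ^ 3) := by
      have : (q - 1) * (1998000 * d ^ 6 / q * N ^ 3) =
        ((q - 1) / q * 1998000) * d ^ 6 * N ^ 3 := by ring
      rw [this]
      have : 1990000 ≤ (q - 1) / q * 1998000 := by
        rw [div_mul_eq_mul_div, le_div_iff₀ hq0]; linarith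
      gcongr
    calc 100 * N ^ 5 / ((q - 1) * W) ≤ 100 * N ^ 5 / (1990000 * d ^ 3 * N ^ 3) := by
          exact div_le_div_of_nonneg_left (by positivity) (by positivity) (hge.trans hden)
      _ = 100 / 1990000 / d ^ 3 * N ^ 2 := by field_simp
      _ ≤ 6 / 100000 / d ^ 3 * N ^ 2 := by gcongr ?_ / d ^ 3 * N ^ 2; norm_num
      _ = _ := by field_simp; norm_num
  calc _ ≤ 6 / 100 * (1 / (1000 * d ^ 3)) * N ^ 2 +
        (10 / 9) * (d + 2) * (1 / (1000 * d ^ 3)) * N ^ 2 := by gcongr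
    _ = (6 / 100 + (10 / 9) * (d + 2)) / (1000 * d ^ 3) * N ^ 2 := by ring
    _ ≤ (34 / 10 * d) / (1000 * d ^ 3) * N ^ 2 := by gcongr; linarith
    _ = _ := by field_simp; norm_num

/-! ### Closeness to a polynomial -/

set_option maxHeartbeats 1000000 in
/-- For an excellent pair `(x, σ)`, the plurality function `f` of `𝒞_{x,σ}` is
`4dγ`-close to a polynomial of total degree at most `d`. -/
theorem plurality_close_to_degree_d {F : Type} [Field F] [Fintype F] {n d : ℕ}
    (hn : 6 ≤ n) (hd : 1 ≤ d)
    (hq : (11 * d : ℝ) < (Fintype.card F : ℝ) ^ ((1 : ℝ) / 9))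
    (T : AffineSubspace F (Fin n → F) → (Fin n → F) → F)
    (hT : DegTable F n d T)
    (hε : 10 ^ 7 * (d : ℝ) ^ 6 / (Fintype.card F : ℝ) ≤ epsT F n T)
    (x : Fin n → F) (σ : F) (hexc : Excellent F n T d (epsT F n T) x σ)
    (f : (Fin n → F) → F)
    (hf : ∀ y : Fin n → F, (cubesVal F n T x σ ∩ cubesOn F n y).Nonempty → ∀ v : F,
      {C ∈ cubesVal F n T x σ ∩ cubesOn F n y | T C y = v}.ncard ≤
        {C ∈ cubesVal F n T x σ ∩ cubesOn F n y | T C y = f y}.ncard) :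
    ∃ g : MvPolynomial (Fin n) F, g.totalDegree ≤ d ∧
      (1 - 4 * (d : ℝ) * gam d) * (Fintype.card F : ℝ) ^ n ≤
        (({z : Fin n → F | f z = eval z g}).ncard : ℝ) := by
  classical
  have hd1 : (1 : ℝ) ≤ d := by exact_mod_cast hd
  have hd0 : (0 : ℝ) < d := by linarith
  set q : ℝ := ((Fintype.card F : ℕ) : ℝ) with hqdef
  have hq0 : 0 ≤ q := Nat.cast_nonneg _
  have hq9 : (11 * d : ℝ) ^ 9 < q := by
    have h := pow_lt_pow_left₀ hq (by positivity) (n := 9) (by norm_num)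
    rwa [← Real.rpow_natCast (q ^ ((1 : ℝ) / 9)), ← Real.rpow_mul hq0,
      show (1 : ℝ) / 9 * ((9 : ℕ) : ℝ) = 1 by norm_num, Real.rpow_one] at h
  have hqd : 1000 * (d : ℝ) < q := by
    refine lt_of_le_of_lt ?_ hq9
    rw [mul_pow]
    have : (d : ℝ) ≤ d ^ 9 := le_self_pow₀ hd1 (by norm_num)
    nlinarith
  have hq1000 : 1000 ≤ q := by linarith
  set N : ℝ := ((Fintype.card (Fin n → F) : ℕ) : ℝ) with hN
  have hNq : N = q ^ n := by rw [hN, Fintype.card_fun, Fintype.card_fin]; push_cast; rfl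
  have hN6 : q ^ 6 ≤ N := by rw [hNq]; exact pow_le_pow_right₀ (by linarith) hn
  have hN0 : 0 < N := lt_of_lt_of_le (by positivity) hN6
  obtain ⟨hmu, hline⟩ := hexc
  set A := Finset.univ.filter (fun C => C ∈ cubesVal F n T x σ) with hA
  have hAmem : ∀ C, C ∈ A ↔ C ∈ cubesVal F n T x σ := fun C => by simp [hA]
  have hAset : (A : Set (AffineSubspace F (Fin n → F))) = cubesVal F n T x σ := by
    ext C; simp [hA]
  have hAon : ∀ C ∈ A, C ∈ cubesOn F n x := fun C hC =>
    ⟨((hAmem C).1 hC).1, ((hAmem C).1 hC).2.1⟩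
  set W : ℝ := ∑ u, ∑ v, ∑ w, (if cubeThrough x u v w ∈ A then (1 : ℝ) else 0) with hW
  have hWge := weight_ge x A hAon (10 ^ 7 * (d : ℝ) ^ 6 / q / 5) (by positivity)
    (by rw [hAset]; exact le_trans (by gcongr) hmu)
  rw [← hW, ← hN, ← hqdef] at hWge
  have hW0 : 0 < W := by
    refine lt_of_lt_of_le (mul_pos (by positivity) ?_) hWge
    have h1 : 1 + q + q ^ 2 < N := by
      refine lt_of_lt_of_le ?_ hN6
      have : q ^ 6 = q ^ 4 * q ^ 2 := by ring
      have h4 : (1000 : ℝ) ^ 4 ≤ q ^ 4 := pow_le_pow_left₀ (by norm_num) hq1000 4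
      nlinarith [mul_le_mul_of_nonneg_right h4 (sq_nonneg q)]
    nlinarith [mul_pos (sq_pos_of_pos hN0) (sub_pos.2 h1)]
  -- the disagreement bound, transported to triples of directions
  have hdis : ∑ u, ∑ v, ∑ w, (if cubeThrough x u v w ∈ A then
      (if T (cubeThrough x u v w) (x + u) ≠ f (x + u) then (1 : ℝ) else 0) else 0) ≤
      gam d * W := by
    rw [sum_cubeThrough x A (fun C hC => ⟨(hAon C hC).2, (hAon C hC).1.2⟩)
      fun C u => if T C (x + u) ≠ f (x + u) then (1 : ℝ) else 0, hW, weight_eq x A hAon]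
    have := disagreement_with_plurality T x σ (gam d) hline f hf A hAmem
    calc _ ≤ _ := mul_le_mul_of_nonneg_left this (Nat.cast_nonneg _)
      _ = _ := by ring
  set δ : ℝ := 17 / (5000 * (d : ℝ) ^ 2) with hδ
  have hδ0 : 0 ≤ δ := by positivity
  have hδd : (d : ℝ) ^ 2 * δ = 17 / 5000 := by rw [hδ]; field_simp
  have hδd1 : (d : ℝ) * δ ≤ 17 / 5000 := by
    rw [← hδd]; gcongr; exact le_self_pow₀ hd1 (by norm_num)
  have hδ1 : δ ≤ 17 / 5000 := by nlinarith
  obtain ⟨P, hP, hclose⟩ := close_to_poly_of_extrap (d := d)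
    (by have : (2 * d : ℝ) < q := by linarith
        rw [hqdef] at this; exact_mod_cast this)
    (by have : (d + 2 : ℝ) ≤ q := by linarith
        rw [hqdef] at this; exact_mod_cast this) f δ (by nlinarith) (by
      intro S hS hSd
      have hbad := bad_pairs_le T hT x A (fun C hC => (hAon C hC).1) f (gam d) W hW hW0 hdis
        S hS hSd
      have hinj := card_filter_le_of_injective
        (fun p : (Fin n → F) × (Fin n → F) =>
          f (x + p.1) ≠ extrap S fun s => f (x + p.1 + s • p.2))
        (fun p : (Fin n → F) × (Fin n → F) => (p.1 - x, p.2)) (by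
          rintro ⟨p, p'⟩ ⟨r, r'⟩ h
          simpa using h)
      simp only [add_sub_cancel] at hinj
      refine le_trans (by exact_mod_cast hinj) (hbad.trans ?_)
      exact numeric_bound hd1 hq1000 hN6 hWge)
  refine ⟨P, hP, ?_⟩
  rw [← hN] at hclose
  have hcompl : (({z : Fin n → F | f z = eval z P}).ncard : ℝ) =
      N - (Finset.univ.filter fun y => f y ≠ eval y P).card := by
    have h1 := Finset.card_filter_add_card_filter_not (s := (Finset.univ : Finset (Fin n → F)))
      (fun y => f y = eval y P)
    have h2 : ({z : Fin n → F | f z = eval z P}).ncard =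
        (Finset.univ.filter fun y => f y = eval y P).card := by
      rw [Set.ncard_eq_toFinset_card']
      congr 1; ext z; simp
    rw [h2, eq_sub_iff_add_eq, hN, ← Finset.card_univ]
    exact_mod_cast h1
  rw [hcompl, ← hNq]
  set b : ℝ := ((Finset.univ.filter fun y => f y ≠ eval y P).card : ℝ) with hb
  have hb0 : 0 ≤ b := Nat.cast_nonneg _
  have hgam : 4 * (d : ℝ) * gam d = 20 / 17 * δ := by
    rw [gam, hδ]; field_simp; norm_num
  rw [hgam]
  have h1 : (9864 / 10000) * b ≤ δ * N := by
    refine le_trans ?_ hclose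
    gcongr
    nlinarith
  nlinarith [mul_nonneg hδ0 hN0.le]
end
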